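/- arXiv:1509.02251 — 2 statements merged into one kernel-verified Lean document; each statement's English description precedes it below -/
import Mathlib

section
/- Let χ_h be the top (normalized, non-negative) eigenfunction of L_h = π_h (dQ_{log d}) π_h with eigenvalue λ_h > 0. Then for every k ≥ 0, ‖χ_h‖_{L^{q_k}(ν)} ≤ (d/λ_h)^k, where q_k = 1 + d^{2k}. -/
open MeasureTheory ProbabilityTheory

open scoped ENNReal

/-!
The two-point inequality of Bonami and Beckner, `‖a + ρ ε b‖_q ≤ ‖a + ε b‖_p` for a random sign `ε`
and `ρ² (q - 1) ≤ p - 1`, follows for `q ≤ 2` by comparing the even binomial series of the two sides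
term by term and applying Bernoulli's inequality, for `p ≥ 2` by duality, and otherwise by passing
through `L²`. In its dual, bilinear form it is a bound `E[G(X)^a F(Y)^b] ≤ E[G(X)]^a E[F(Y)]^b` for
a pair of correlated signs. Such bounds survive convolution and weak limits, so by the central
limit theorem they hold for correlated Gaussian pairs, where they say that the Ornstein–Uhlenbeck
operator is hypercontractive.

Since cutting off to `[h, ∞)` contracts every norm, each use of the eigenvalue equation
`χ = (d / λ) π Q π χ` improves an `L^(1 + d^(2k))` bound on `χ` to an `L^(1 + d^(2(k + 1)))` bound
at the cost of a factor `d / λ`, starting from `‖χ‖₂ = 1`.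
-/

section

open Filter
open scoped NNReal Topology BoundedContinuousFunction

/-! ### The two-point inequality -/

theorem succ_mul_ringChoose_succ {R : Type*} [CommRing R] [BinomialRing R] (a : R) (n : ℕ) :
    (n + 1) * Ring.choose a (n + 1) = Ring.choose a n * (a - n) := by
  simpa using Ring.choose_smul_choose a n.le_succ

theorem mul_ringChoose_two_mul_add_two {R : Type*} [CommRing R] [BinomialRing R] (a : R) (n : ℕ) :
    (2 * n + 1) * (2 * n + 2) * Ring.choose a (2 * n + 2) =
      (2 * n - a) * (2 * n + 1 - a) * Ring.choose a (2 * n) := by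
  have h₁ := succ_mul_ringChoose_succ a (2 * n)
  have h₂ := succ_mul_ringChoose_succ a (2 * n + 1)
  push_cast at h₁ h₂
  linear_combination (2 * (n : R) + 1) * h₂ + (a - (2 * n + 1)) * h₁

theorem hasSum_one_add_rpow (a : ℝ) {x : ℝ} (hx : |x| < 1) :
    HasSum (fun n ↦ Ring.choose a n * x ^ n) ((1 + x) ^ a) := by
  have h := (Real.one_add_rpow_hasFPowerSeriesOnBall_zero (a := a)).hasSum (y := x)
    (by simpa [enorm_eq_nnnorm, ← NNReal.coe_lt_one] using hx)
  simpa [binomialSeries, FormalMultilinearSeries.coeff_ofScalars, mul_comm] using h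

/-- The `r`-th moment `E (a + ε b) ^ r`, where `ε` is a uniformly distributed sign. -/
noncomputable def signMoment (r a b : ℝ) : ℝ := ((a + b) ^ r + (a - b) ^ r) / 2

/-- The `L^p` norm of the random variable `a + ε b`, where `ε` is a uniformly distributed sign;
it is meaningful for `|b| ≤ a`, when `a + ε b` is nonnegative. -/
noncomputable def signNorm (p a b : ℝ) : ℝ := signMoment p a b ^ p⁻¹

theorem hasSum_signMoment_one (r : ℝ) {x : ℝ} (hx : |x| < 1) :
    HasSum (fun n ↦ Ring.choose r (2 * n) * x ^ (2 * n)) (signMoment r 1 x) := by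
  have h := ((hasSum_one_add_rpow r hx).add
    (hasSum_one_add_rpow r (x := -x) (by simpa using hx))).div_const 2
  rw [← sub_eq_add_neg] at h
  refine (((mul_right_injective₀ (two_ne_zero' ℕ)).hasSum_iff fun n hn ↦ ?_).2 h).congr_fun
    fun n ↦ by simp
  have hodd : Odd n := by
    rw [← Nat.not_even_iff_odd, even_iff_exists_two_mul]
    exact fun ⟨m, hm⟩ ↦ hn ⟨m, hm.symm⟩
  simp [hodd.neg_pow]

theorem ringChoose_two_mul_nonneg {r : ℝ} (hr₁ : 1 ≤ r) (hr₂ : r ≤ 2) (n : ℕ) :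
    0 ≤ Ring.choose r (2 * n) := by
  induction n with
  | zero => simp
  | succ n ih =>
    have hfactor : 0 ≤ (2 * n - r) * (2 * n + 1 - r) := by
      rcases n.eq_zero_or_pos with rfl | hn
      · rw [Nat.cast_zero]; nlinarith
      · have : (1 : ℝ) ≤ n := by exact_mod_cast hn
        exact mul_nonneg (by linarith) (by linarith)
    refine nonneg_of_mul_nonneg_right ?_ (show (0 : ℝ) < (2 * n + 1) * (2 * n + 2) by positivity)
    exact (mul_nonneg hfactor ih).trans_eq (mul_ringChoose_two_mul_add_two r n).symm

theorem sq_le_one_of_mul_sub_one_le {p q ρ : ℝ} (hp : 1 < p) (hpq : p ≤ q)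
    (hρ : ρ ^ 2 * (q - 1) ≤ p - 1) : ρ ^ 2 ≤ 1 := by
  nlinarith

theorem mul_ringChoose_two_mul_le {p q ρ : ℝ} (hp : 1 < p) (hpq : p ≤ q) (hq : q ≤ 2)
    (hρ : ρ ^ 2 * (q - 1) ≤ p - 1) (n : ℕ) :
    p * (Ring.choose q (2 * (n + 1)) * ρ ^ (2 * (n + 1))) ≤ q * Ring.choose p (2 * (n + 1)) := by
  have hρ₁ := sq_le_one_of_mul_sub_one_le hp hpq hρ
  induction n with
  | zero =>
    have h₁ := mul_ringChoose_two_mul_add_two p 0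
    have h₂ := mul_ringChoose_two_mul_add_two q 0
    simp only [Nat.cast_zero, mul_zero, zero_add, zero_sub, one_mul, Ring.choose_zero_right,
      mul_one] at h₁ h₂ ⊢
    have hpq₀ : 0 ≤ p * q := mul_nonneg (by linarith) (by linarith)
    have := mul_le_mul_of_nonneg_left hρ hpq₀
    linear_combination 1 / 2 * this + p * ρ ^ 2 / 2 * h₂ - q / 2 * h₁
  | succ n ih =>
    have h₁ := mul_ringChoose_two_mul_add_two p (n + 1)
    have h₂ := mul_ringChoose_two_mul_add_two q (n + 1)
    set m : ℝ := ((n + 1 : ℕ) : ℝ) with hm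
    have hm₁ : 1 ≤ m := by simp [hm]
    have hρn : 0 ≤ ρ ^ (2 * (n + 1)) := by rw [pow_mul]; positivity
    have hchoose := ringChoose_two_mul_nonneg (hp.le.trans hpq) hq (n + 1)
    have hfactor : 0 ≤ (2 * m - q) * (2 * m + 1 - q) := mul_nonneg (by linarith) (by linarith)
    refine le_of_mul_le_mul_left ?_ (show 0 < (2 * m + 1) * (2 * m + 2) by positivity)
    calc (2 * m + 1) * (2 * m + 2) *
          (p * (Ring.choose q (2 * (n + 1 + 1)) * ρ ^ (2 * (n + 1 + 1))))
        = p * (Ring.choose q (2 * (n + 1)) * ρ ^ (2 * (n + 1))) * ρ ^ 2 *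
          ((2 * m - q) * (2 * m + 1 - q)) := by
          linear_combination p * ρ ^ (2 * (n + 1 + 1)) * h₂
      _ ≤ p * (Ring.choose q (2 * (n + 1)) * ρ ^ (2 * (n + 1))) * 1 *
          ((2 * m - p) * (2 * m + 1 - p)) := by
          gcongr <;> linarith
      _ ≤ q * Ring.choose p (2 * (n + 1)) * ((2 * m - p) * (2 * m + 1 - p)) := by
          rw [mul_one]
          gcongr
          exact mul_nonneg (by linarith) (by linarith)
      _ = (2 * m + 1) * (2 * m + 2) * (q * Ring.choose p (2 * (n + 1 + 1))) := by
          linear_combination -q * h₁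

theorem signMoment_nonneg (r : ℝ) {a b : ℝ} (h : |b| ≤ a) : 0 ≤ signMoment r a b := by
  rw [abs_le] at h
  have := Real.rpow_nonneg (show 0 ≤ a + b by linarith) r
  have := Real.rpow_nonneg (show 0 ≤ a - b by linarith) r
  unfold signMoment
  positivity

theorem signNorm_nonneg (p : ℝ) {a b : ℝ} (h : |b| ≤ a) : 0 ≤ signNorm p a b :=
  Real.rpow_nonneg (signMoment_nonneg p h) _

theorem signNorm_rpow {p a b : ℝ} (hp : p ≠ 0) (h : |b| ≤ a) :
    signNorm p a b ^ p = signMoment p a b :=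
  Real.rpow_inv_rpow (signMoment_nonneg p h) hp

theorem signNorm_mul {p a b c : ℝ} (hp : p ≠ 0) (hc : 0 ≤ c) (h : |b| ≤ a) :
    signNorm p (c * a) (c * b) = c * signNorm p a b := by
  have h' := abs_le.1 h
  have hmoment : signMoment p (c * a) (c * b) = c ^ p * signMoment p a b := by
    simp only [signMoment, ← mul_add, ← mul_sub]
    rw [Real.mul_rpow hc (by linarith), Real.mul_rpow hc (by linarith)]
    ring
  rw [signNorm, hmoment, Real.mul_rpow (by positivity) (signMoment_nonneg p h),
    Real.rpow_rpow_inv hc hp, signNorm]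

theorem continuous_signNorm {p : ℝ} (hp : 0 < p) (b : ℝ) : Continuous fun a ↦ signNorm p a b := by
  have := hp.le
  have := inv_nonneg.2 hp.le
  unfold signNorm signMoment
  fun_prop (disch := assumption)

theorem abs_mul_le_of_sq_le_one {ρ b : ℝ} (hρ : ρ ^ 2 ≤ 1) : |ρ * b| ≤ |b| := by
  rw [abs_mul]
  exact mul_le_of_le_one_left (abs_nonneg b) (sq_le_one_iff_abs_le_one ρ |>.1 hρ)

theorem signMoment_one_mul_le {p q ρ x : ℝ} (hp : 1 < p) (hpq : p ≤ q) (hq : q ≤ 2)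
    (hρ : ρ ^ 2 * (q - 1) ≤ p - 1) (hx : |x| < 1) :
    signMoment q 1 (ρ * x) ≤ signMoment p 1 x ^ (q / p) := by
  have hp₀ : 0 < p := by linarith
  have hρx := (abs_mul_le_of_sq_le_one (b := x) (sq_le_one_of_mul_sub_one_le hp hpq hρ)).trans_lt hx
  have hseries_q := (hasSum_nat_add_iff' 1).2 (hasSum_signMoment_one q hρx)
  have hseries_p := (hasSum_nat_add_iff' 1).2 (hasSum_signMoment_one p hx)
  simp only [Finset.range_one, Finset.sum_singleton, mul_zero, Ring.choose_zero_right, pow_zero,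
    mul_one] at hseries_q hseries_p
  have hcompare : signMoment q 1 (ρ * x) - 1 ≤ q / p * (signMoment p 1 x - 1) := by
    refine hasSum_le (fun n ↦ ?_) hseries_q (hseries_p.mul_left (q / p))
    have hx₀ : 0 ≤ x ^ (2 * (n + 1)) := by rw [pow_mul]; positivity
    have := mul_le_mul_of_nonneg_right (mul_ringChoose_two_mul_le hp hpq hq hρ n) hx₀
    rw [mul_pow, div_mul_eq_mul_div, le_div_iff₀ hp₀]
    linarith
  have hbernoulli := one_add_mul_self_le_rpow_one_add
    (show -1 ≤ signMoment p 1 x - 1 by linarith [signMoment_nonneg p hx.le])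
    ((one_le_div hp₀).2 hpq)
  rw [add_sub_cancel] at hbernoulli
  linarith

theorem signNorm_le_of_le_two {p q ρ a b : ℝ} (hp : 1 < p) (hpq : p ≤ q) (hq : q ≤ 2)
    (hρ : ρ ^ 2 * (q - 1) ≤ p - 1) (hab : |b| ≤ a) :
    signNorm q a (ρ * b) ≤ signNorm p a b := by
  have hp₀ : 0 < p := by linarith
  have hq₀ : 0 < q := by linarith
  refine le_of_tendsto_of_tendsto (b := 𝓝[>] a)
    (continuous_signNorm hq₀ (ρ * b)).continuousWithinAt
    (continuous_signNorm hp₀ b).continuousWithinAt ?_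
  filter_upwards [self_mem_nhdsWithin] with a' ha'
  have ha'₀ : 0 < a' := (abs_nonneg b).trans_lt (hab.trans_lt ha')
  have hx : |b / a'| < 1 := by
    rw [abs_div, abs_of_pos ha'₀, div_lt_one ha'₀]
    exact hab.trans_lt ha'
  have hρx : |ρ * (b / a')| ≤ 1 :=
    (abs_mul_le_of_sq_le_one (sq_le_one_of_mul_sub_one_le hp hpq hρ)).trans hx.le
  have hnormalized : signNorm q 1 (ρ * (b / a')) ≤ signNorm p 1 (b / a') := by
    rw [signNorm,
      Real.rpow_inv_le_iff_of_pos (signMoment_nonneg q hρx) (signNorm_nonneg p hx.le) hq₀,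
      signNorm, ← Real.rpow_mul (signMoment_nonneg p hx.le), inv_mul_eq_div]
    exact signMoment_one_mul_le hp hpq hq hρ hx
  calc signNorm q a' (ρ * b) = a' * signNorm q 1 (ρ * (b / a')) := by
        rw [← signNorm_mul hq₀.ne' ha'₀.le hρx]
        congr 1 <;> field_simp
    _ ≤ a' * signNorm p 1 (b / a') := by gcongr
    _ = signNorm p a' b := by
        rw [← signNorm_mul hp₀.ne' ha'₀.le hx.le]
        congr 1 <;> field_simp

theorem mul_add_mul_le_signNorm_mul_signNorm {p q a b a' b' : ℝ} (hpq : p.HolderConjugate q)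
    (h : |b| ≤ a) (h' : |b'| ≤ a') :
    a * a' + b * b' ≤ signNorm p a b * signNorm q a' b' := by
  have hab := abs_le.1 h
  have hab' := abs_le.1 h'
  have hmoment := signMoment_nonneg p h
  have hmoment' := signMoment_nonneg q h'
  have hholder := Real.inner_le_Lp_mul_Lq_of_nonneg (Finset.univ : Finset (Fin 2)) hpq
    (f := ![a + b, a - b]) (g := ![a' + b', a' - b'])
    (by intro i _; fin_cases i <;> simp <;> linarith)
    (by intro i _; fin_cases i <;> simp <;> linarith)
  simp only [Fin.sum_univ_two, Matrix.cons_val_zero, Matrix.cons_val_one, one_div] at hholder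
  calc a * a' + b * b' = ((a + b) * (a' + b') + (a - b) * (a' - b')) / 2 := by ring
    _ ≤ (2 * signMoment p a b) ^ p⁻¹ * (2 * signMoment q a' b') ^ q⁻¹ / 2 := by
        simp only [signMoment, mul_div_cancel₀ _ (two_ne_zero' ℝ)]
        gcongr
    _ = 2 ^ (p⁻¹ + q⁻¹) * (signNorm p a b * signNorm q a' b') / 2 := by
        rw [Real.mul_rpow two_pos.le hmoment, Real.mul_rpow two_pos.le hmoment',
          Real.rpow_add two_pos, signNorm, signNorm]
        ring
    _ = signNorm p a b * signNorm q a' b' := by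
        rw [hpq.inv_add_inv_eq_one, Real.rpow_one, mul_div_cancel_left₀ _ two_ne_zero]

-- The extremizer is the `(q - 1)`-st power of the random variable `a + ε b`.
theorem exists_signNorm_dual {q q' a b : ℝ} (hq : q.HolderConjugate q') (h : |b| ≤ a) :
    ∃ a' b', |b'| ≤ a' ∧ a * a' + b * b' = signNorm q a b ^ q ∧
      signNorm q' a' b' = signNorm q a b ^ (q - 1) := by
  have hq₁ : q - 1 ≠ 0 := hq.sub_one_ne_zero
  obtain ⟨hplus, hminus⟩ : 0 ≤ a + b ∧ 0 ≤ a - b := by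
    rw [abs_le] at h; constructor <;> linarith
  have hpow {u : ℝ} (hu : 0 ≤ u) : u * u ^ (q - 1) = u ^ q := by
    rw [← Real.rpow_one_add' hu (by simpa using hq.ne_zero), add_sub_cancel]
  have hpow' {u : ℝ} (hu : 0 ≤ u) : (u ^ (q - 1)) ^ q' = u ^ q := by
    rw [← Real.rpow_mul hu, hq.sub_one_mul_conj]
  have hplus' := Real.rpow_nonneg hplus (q - 1)
  have hminus' := Real.rpow_nonneg hminus (q - 1)
  refine ⟨((a + b) ^ (q - 1) + (a - b) ^ (q - 1)) / 2, ((a + b) ^ (q - 1) - (a - b) ^ (q - 1)) / 2,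
    abs_le.2 ⟨by linarith, by linarith⟩, ?_, ?_⟩
  · rw [signNorm_rpow hq.ne_zero h, signMoment, ← hpow hplus, ← hpow hminus]
    ring
  · have hexp : q⁻¹ * (q - 1) = q'⁻¹ := by
      rw [mul_sub, inv_mul_cancel₀ hq.ne_zero, mul_one, hq.one_sub_inv]
    rw [signNorm, signNorm, ← Real.rpow_mul (signMoment_nonneg q h), hexp, signMoment, signMoment,
      ← add_div, ← sub_div, add_add_sub_cancel, add_sub_sub_cancel, add_self_div_two,
      add_self_div_two, hpow' hplus, hpow' hminus]

theorem signNorm_le_of_dual {p p' q q' ρ : ℝ} (hp : p.HolderConjugate p')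
    (hq : q.HolderConjugate q') (hρ : ρ ^ 2 ≤ 1)
    (hdual : ∀ a b, |b| ≤ a → signNorm p' a (ρ * b) ≤ signNorm q' a b) {a b : ℝ} (h : |b| ≤ a) :
    signNorm q a (ρ * b) ≤ signNorm p a b := by
  have hρb : |ρ * b| ≤ a := (abs_mul_le_of_sq_le_one hρ).trans h
  obtain ⟨a', b', h', hpair, hnorm⟩ := exists_signNorm_dual hq hρb
  rcases (signNorm_nonneg q hρb).eq_or_lt with hzero | hpos
  · exact hzero ▸ signNorm_nonneg p h
  refine le_of_mul_le_mul_right ?_ (Real.rpow_pos_of_pos hpos (q - 1))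
  calc signNorm q a (ρ * b) * signNorm q a (ρ * b) ^ (q - 1)
      = a * a' + b * (ρ * b') := by
        rw [← Real.rpow_one_add' hpos.le (by simpa using hq.ne_zero), add_sub_cancel, ← hpair]
        ring
    _ ≤ signNorm p a b * signNorm p' a' (ρ * b') :=
        mul_add_mul_le_signNorm_mul_signNorm hp h ((abs_mul_le_of_sq_le_one hρ).trans h')
    _ ≤ signNorm p a b * signNorm q a (ρ * b) ^ (q - 1) := by
        rw [← hnorm]
        exact mul_le_mul_of_nonneg_left (hdual a' b' h') (signNorm_nonneg p h)

theorem signNorm_le_of_two_le {p q ρ a b : ℝ} (hp : 2 ≤ p) (hpq : p ≤ q)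
    (hρ : ρ ^ 2 * (q - 1) ≤ p - 1) (hab : |b| ≤ a) :
    signNorm q a (ρ * b) ≤ signNorm p a b := by
  have hp₁ : 1 < p := by linarith
  have hq₁ : 1 < q := by linarith
  have hp' : p.conjExponent - 1 = (p - 1)⁻¹ := by
    rw [Real.conjExponent]; field_simp [(sub_pos.2 hp₁).ne']; ring
  have hq' : q.conjExponent - 1 = (q - 1)⁻¹ := by
    rw [Real.conjExponent]; field_simp [(sub_pos.2 hq₁).ne']; ring
  refine signNorm_le_of_dual (.conjExponent hp₁) (.conjExponent hq₁)
    (sq_le_one_of_mul_sub_one_le hp₁ hpq hρ) (fun a b h ↦ ?_) hab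
  refine signNorm_le_of_le_two (Real.HolderConjugate.conjExponent hq₁).symm.lt ?_ ?_ ?_ h
  · have : (q - 1)⁻¹ ≤ (p - 1)⁻¹ := inv_anti₀ (by linarith) (by linarith)
    linarith
  · have : (p - 1)⁻¹ ≤ 1 := inv_le_one_of_one_le₀ (by linarith)
    linarith
  · rw [hp', hq', ← div_eq_mul_inv, div_le_iff₀ (by linarith), inv_mul_eq_div,
      le_div_iff₀ (by linarith)]
    exact hρ

theorem signNorm_le {p q ρ a b : ℝ} (hp : 1 < p) (hpq : p ≤ q) (hρ : ρ ^ 2 * (q - 1) ≤ p - 1)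
    (hab : |b| ≤ a) : signNorm q a (ρ * b) ≤ signNorm p a b := by
  rcases le_total q 2 with hq₂ | hq₂
  · exact signNorm_le_of_le_two hp hpq hq₂ hρ hab
  rcases le_total 2 p with hp₂ | hp₂
  · exact signNorm_le_of_two_le hp₂ hpq hρ hab
  have hp₁ : 0 < p - 1 := by linarith
  set σ := √(p - 1)
  have hσ₀ : 0 < σ := Real.sqrt_pos.2 hp₁
  have hσ_sq : σ ^ 2 = p - 1 := Real.sq_sqrt hp₁.le
  calc signNorm q a (ρ * b) = signNorm q a (ρ / σ * (σ * b)) := by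
        rw [← mul_assoc, div_mul_cancel₀ _ hσ₀.ne']
    _ ≤ signNorm 2 a (σ * b) := by
        refine signNorm_le_of_two_le le_rfl hq₂ ?_
          ((abs_mul_le_of_sq_le_one (by linarith)).trans hab)
        rw [div_pow, hσ_sq, div_mul_eq_mul_div, div_le_iff₀ hp₁]
        linarith
    _ ≤ signNorm p a b := signNorm_le_of_le_two hp hp₂ le_rfl (by linarith) hab

theorem mul_add_mul_mul_le_signNorm_mul_signNorm {p q q' ρ a b a' b' : ℝ} (hp : 1 < p)
    (hpq : p ≤ q) (hq : q.HolderConjugate q') (hρ : ρ ^ 2 * (q - 1) ≤ p - 1) (h : |b| ≤ a)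
    (h' : |b'| ≤ a') :
    a * a' + ρ * (b * b') ≤ signNorm q' a b * signNorm p a' b' :=
  have hρb' := (abs_mul_le_of_sq_le_one (sq_le_one_of_mul_sub_one_le hp hpq hρ)).trans h'
  calc a * a' + ρ * (b * b') = a * a' + b * (ρ * b') := by ring
    _ ≤ signNorm q' a b * signNorm q a' (ρ * b') :=
        mul_add_mul_le_signNorm_mul_signNorm hq.symm h hρb'
    _ ≤ signNorm q' a b * signNorm p a' b' :=
        mul_le_mul_of_nonneg_left (signNorm_le hp hpq hρ h') (signNorm_nonneg q' h)

/-! ### Marginal Hölder bounds -/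

section Approximation

variable {X : Type*} [TopologicalSpace X] [NormalSpace X] [MeasurableSpace X] [BorelSpace X]
  {μ : Measure X} [μ.WeaklyRegular]

theorem exists_boundedContinuous_nnreal_lintegral_sub_le {f : X → ℝ} (hf : Integrable f μ)
    (hf₀ : ∀ x, 0 ≤ f x) {ε : ℝ≥0∞} (hε : ε ≠ 0) :
    ∃ u : X →ᵇ ℝ≥0, ∫⁻ x, ‖(u x : ℝ) - f x‖ₑ ∂μ ≤ ε := by
  obtain ⟨g, hg, -⟩ := hf.exists_boundedContinuous_lintegral_sub_le hε
  refine ⟨g.nnrealPart, (lintegral_mono fun x ↦ ?_).trans hg⟩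
  rw [enorm_le_iff_norm_le, Real.norm_eq_abs, Real.norm_eq_abs, abs_sub_comm (f x)]
  have := abs_max_sub_max_le_abs (g x) (f x) 0
  rwa [max_eq_left (hf₀ x)] at this

theorem exists_seq_boundedContinuous_nnreal_tendsto [IsFiniteMeasure μ] {f : X → ℝ≥0∞}
    (hf : Measurable f) (hfi : ∫⁻ x, f x ∂μ ≠ ⊤) :
    ∃ u : ℕ → X →ᵇ ℝ≥0, (∀ᵐ x ∂μ, Tendsto (fun n ↦ (u n x : ℝ≥0∞)) atTop (𝓝 (f x))) ∧
      Tendsto (fun n ↦ ∫⁻ x, u n x ∂μ) atTop (𝓝 (∫⁻ x, f x ∂μ)) := by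
  have hint : Integrable (fun x ↦ (f x).toReal) μ :=
    integrable_toReal_of_lintegral_ne_top hf.aemeasurable hfi
  have hfin : ∀ᵐ x ∂μ, f x < ⊤ := ae_lt_top hf hfi
  choose u hu using fun n : ℕ ↦ exists_boundedContinuous_nnreal_lintegral_sub_le hint
    (fun x ↦ ENNReal.toReal_nonneg) (ENNReal.inv_ne_zero.2 (ENNReal.natCast_ne_top n))
  have hL1 : Tendsto (fun n ↦ ∫⁻ x, ‖(u n x : ℝ) - (f x).toReal‖ₑ ∂μ) atTop (𝓝 0) :=
    tendsto_of_tendsto_of_tendsto_of_le_of_le tendsto_const_nhds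
      ENNReal.tendsto_inv_nat_nhds_zero (fun n ↦ zero_le) hu
  have hmeas : TendstoInMeasure μ (fun n x ↦ (u n x : ℝ)) atTop fun x ↦ (f x).toReal :=
    tendstoInMeasure_of_tendsto_eLpNorm one_ne_zero (fun n ↦ by fun_prop)
      hint.aestronglyMeasurable
      (by simpa only [eLpNorm_one_eq_lintegral_enorm, Pi.sub_apply] using hL1)
  obtain ⟨ns, hns, hae⟩ := hmeas.exists_seq_tendsto_ae
  refine ⟨u ∘ ns, ?_, ?_⟩
  · filter_upwards [hae, hfin] with x hx hx'
    simpa [ENNReal.ofReal_toReal hx'.ne] using ENNReal.tendsto_ofReal hx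
  · have hintegral := tendsto_integral_of_L1 _ hint.aestronglyMeasurable
      (.of_forall fun n ↦ (u n).integrable_of_nnreal μ) hL1
    rw [integral_toReal hf.aemeasurable hfin] at hintegral
    refine Tendsto.comp (g := fun n ↦ ∫⁻ x, u n x ∂μ)
      ((ENNReal.tendsto_toReal_iff (fun n ↦ ?_) hfi).1 (hintegral.congr fun n ↦ ?_))
      hns.tendsto_atTop
    · exact ((u n).lintegral_lt_top_of_nnreal μ).ne
    · exact integral_toReal (u n).measurable_coe_ennreal_comp.aemeasurable (by simp)

theorem exists_seq_boundedContinuous_nnreal_tendsto_comp {Y : Type*} [MeasurableSpace Y]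
    {m : Measure Y} [IsFiniteMeasure m] {π : Y → X} (hπ : Measurable π) [(m.map π).WeaklyRegular]
    {f : X → ℝ≥0∞} (hf : Measurable f) (hfi : ∫⁻ y, f (π y) ∂m ≠ ⊤) :
    ∃ u : ℕ → X →ᵇ ℝ≥0,
      (∀ᵐ y ∂m, Tendsto (fun n ↦ (u n (π y) : ℝ≥0∞)) atTop (𝓝 (f (π y)))) ∧
      Tendsto (fun n ↦ ∫⁻ y, u n (π y) ∂m) atTop (𝓝 (∫⁻ y, f (π y) ∂m)) := by
  rw [← lintegral_map hf hπ] at hfi ⊢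
  obtain ⟨u, hu_ae, hu_lim⟩ := exists_seq_boundedContinuous_nnreal_tendsto hf hfi
  simp only [lintegral_map (u _).measurable_coe_ennreal_comp hπ] at hu_lim
  exact ⟨u, ae_of_ae_map hπ.aemeasurable hu_ae, hu_lim⟩

end Approximation

/-- A joint law `m` of two real random variables `X`, `Y` satisfies the marginal Hölder bound with
exponents `a` and `b` if `E[G(X)^a F(Y)^b] ≤ E[G(X)]^a E[F(Y)]^b` for all nonnegative measurable
`G` and `F`. For `a = 1/q'` and `b = 1/p`, this says that `f ↦ E[f(Y) | X]` is a contraction from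
`L^p` to `L^q`. The plane is encoded as `ℂ` to have an inner product, hence characteristic
functions, at hand. -/
def MarginalHolderBound (a b : ℝ) (m : Measure ℂ) : Prop :=
  ∀ G F : ℝ → ℝ≥0∞, Measurable G → Measurable F →
    ∫⁻ z, G z.re ^ a * F z.im ^ b ∂m ≤ (∫⁻ z, G z.re ∂m) ^ a * (∫⁻ z, F z.im ∂m) ^ b

theorem lintegral_rpow_mul_rpow_eq_zero {X : Type*} [MeasurableSpace X] {m : Measure X}
    {g f : X → ℝ≥0∞} {a b : ℝ} (ha : 0 < a) (hg : AEMeasurable g m) (hzero : ∫⁻ x, g x ∂m = 0) :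
    ∫⁻ x, g x ^ a * f x ^ b ∂m = 0 := by
  rw [lintegral_eq_zero_iff' hg] at hzero
  refine lintegral_eq_zero_of_ae_eq_zero ?_
  filter_upwards [hzero] with x hx
  simp [show g x = 0 from hx, ha]

namespace MarginalHolderBound

theorem of_forall_lintegral_ne {a b : ℝ} {m : Measure ℂ} (ha : 0 < a) (hb : 0 < b)
    (h : ∀ G F : ℝ → ℝ≥0∞, Measurable G → Measurable F →
      ∫⁻ z, G z.re ∂m ≠ 0 → ∫⁻ z, G z.re ∂m ≠ ⊤ → ∫⁻ z, F z.im ∂m ≠ 0 → ∫⁻ z, F z.im ∂m ≠ ⊤ →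
      ∫⁻ z, G z.re ^ a * F z.im ^ b ∂m ≤ (∫⁻ z, G z.re ∂m) ^ a * (∫⁻ z, F z.im ∂m) ^ b) :
    MarginalHolderBound a b m := by
  intro G F hG hF
  rcases eq_or_ne (∫⁻ z, G z.re ∂m) 0 with hG₀ | hG₀
  · rw [lintegral_rpow_mul_rpow_eq_zero ha (by fun_prop) hG₀]
    exact zero_le
  rcases eq_or_ne (∫⁻ z, F z.im ∂m) 0 with hF₀ | hF₀
  · simp_rw [mul_comm (G _ ^ a)]
    rw [lintegral_rpow_mul_rpow_eq_zero hb (by fun_prop) hF₀]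
    exact zero_le
  rcases eq_or_ne (∫⁻ z, G z.re ∂m) ⊤ with hG_top | hG_top
  · rw [hG_top, ENNReal.top_rpow_of_pos ha, ENNReal.top_mul (by simp [hF₀, hb.le])]
    exact le_top
  rcases eq_or_ne (∫⁻ z, F z.im ∂m) ⊤ with hF_top | hF_top
  · rw [hF_top, ENNReal.top_rpow_of_pos hb, ENNReal.mul_top (by simp [hG₀, ha.le])]
    exact le_top
  exact h G F hG hF hG₀ hG_top hF₀ hF_top

theorem of_forall_boundedContinuous {a b : ℝ} {m : Measure ℂ} [IsFiniteMeasure m] (ha : 0 < a)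
    (hb : 0 < b)
    (h : ∀ G F : ℝ →ᵇ ℝ≥0, ∫⁻ z, (G z.re : ℝ≥0∞) ^ a * (F z.im : ℝ≥0∞) ^ b ∂m ≤
      (∫⁻ z, G z.re ∂m) ^ a * (∫⁻ z, F z.im ∂m) ^ b) :
    MarginalHolderBound a b m := by
  refine of_forall_lintegral_ne ha hb fun G F hG hF hG₀ hG_top hF₀ hF_top ↦ ?_
  obtain ⟨g, hg_ae, hg_lim⟩ :=
    exists_seq_boundedContinuous_nnreal_tendsto_comp Complex.measurable_re hG hG_top
  obtain ⟨f, hf_ae, hf_lim⟩ :=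
    exists_seq_boundedContinuous_nnreal_tendsto_comp Complex.measurable_im hF hF_top
  have hlim_le : Tendsto (fun n ↦ (∫⁻ z, g n z.re ∂m) ^ a * (∫⁻ z, f n z.im ∂m) ^ b) atTop
      (𝓝 ((∫⁻ z, G z.re ∂m) ^ a * (∫⁻ z, F z.im ∂m) ^ b)) :=
    ENNReal.Tendsto.mul (hg_lim.ennrpow_const a) (.inl (by simp [hG₀, ha.le]))
      (hf_lim.ennrpow_const b) (.inl (by simp [hF₀, hb.le]))
  have hlim : ∀ᵐ z ∂m, Tendsto (fun n ↦ (g n z.re : ℝ≥0∞) ^ a * (f n z.im : ℝ≥0∞) ^ b) atTop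
      (𝓝 (G z.re ^ a * F z.im ^ b)) := by
    filter_upwards [hg_ae, hf_ae, ae_lt_top (by fun_prop) hG_top, ae_lt_top (by fun_prop) hF_top]
      with z hgz hfz hGz hFz
    exact ENNReal.Tendsto.mul (hgz.ennrpow_const a)
      (.inr (ENNReal.rpow_ne_top_of_nonneg hb.le hFz.ne)) (hfz.ennrpow_const b)
      (.inr (ENNReal.rpow_ne_top_of_nonneg ha.le hGz.ne))
  calc ∫⁻ z, G z.re ^ a * F z.im ^ b ∂m
      = ∫⁻ z, liminf (fun n ↦ (g n z.re : ℝ≥0∞) ^ a * (f n z.im : ℝ≥0∞) ^ b) atTop ∂m :=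
        lintegral_congr_ae (hlim.mono fun z hz ↦ hz.liminf_eq.symm)
    _ ≤ liminf (fun n ↦ ∫⁻ z, (g n z.re : ℝ≥0∞) ^ a * (f n z.im : ℝ≥0∞) ^ b ∂m) atTop :=
        lintegral_liminf_le fun n ↦ by fun_prop
    _ ≤ liminf (fun n ↦ (∫⁻ z, g n z.re ∂m) ^ a * (∫⁻ z, f n z.im ∂m) ^ b) atTop :=
        liminf_le_liminf (.of_forall fun n ↦ h (g n) (f n))
    _ = (∫⁻ z, G z.re ∂m) ^ a * (∫⁻ z, F z.im ∂m) ^ b := hlim_le.liminf_eq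

theorem dirac (a b : ℝ) (z : ℂ) : MarginalHolderBound a b (Measure.dirac z) := by
  intro G F _ _
  simp

theorem conv {a b : ℝ} {m₁ m₂ : Measure ℂ} [SFinite m₁] [SFinite m₂]
    (h₁ : MarginalHolderBound a b m₁) (h₂ : MarginalHolderBound a b m₂) :
    MarginalHolderBound a b (m₁ ∗ m₂) := by
  intro G F hG hF
  rw [Measure.lintegral_conv (by fun_prop), Measure.lintegral_conv (by fun_prop),
    Measure.lintegral_conv (by fun_prop)]
  simp only [Complex.add_re, Complex.add_im]
  calc ∫⁻ x, ∫⁻ y, G (x.re + y.re) ^ a * F (x.im + y.im) ^ b ∂m₂ ∂m₁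
      ≤ ∫⁻ x, (∫⁻ y, G (x.re + y.re) ∂m₂) ^ a * (∫⁻ y, F (x.im + y.im) ∂m₂) ^ b ∂m₁ :=
        lintegral_mono fun x ↦
          h₂ (fun u ↦ G (x.re + u)) (fun u ↦ F (x.im + u)) (by fun_prop) (by fun_prop)
    _ ≤ _ :=
        h₁ (fun u ↦ ∫⁻ y, G (u + y.re) ∂m₂) (fun u ↦ ∫⁻ y, F (u + y.im) ∂m₂)
          (Measurable.lintegral_prod_right' (f := fun q : ℝ × ℂ ↦ G (q.1 + q.2.re)) (by fun_prop))
          (Measurable.lintegral_prod_right' (f := fun q : ℝ × ℂ ↦ F (q.1 + q.2.im)) (by fun_prop))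

theorem of_tendsto {ι : Type*} {l : Filter ι} [l.NeBot] {a b : ℝ} {μs : ι → ProbabilityMeasure ℂ}
    {μ : ProbabilityMeasure ℂ} (ha : 0 < a) (hb : 0 < b) (hlim : Tendsto μs l (𝓝 μ))
    (h : ∀ i, MarginalHolderBound a b (μs i)) : MarginalHolderBound a b μ := by
  refine of_forall_boundedContinuous ha hb fun G F ↦ ?_
  have hlintegral := ProbabilityMeasure.tendsto_iff_forall_lintegral_tendsto.1 hlim
  let Gre : ℂ →ᵇ ℝ≥0 := G.compContinuous ⟨Complex.re, Complex.continuous_re⟩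
  let Fim : ℂ →ᵇ ℝ≥0 := F.compContinuous ⟨Complex.im, Complex.continuous_im⟩
  have hbound (z : ℂ) : G z.re ^ a * F z.im ^ b ≤ nndist G 0 ^ a * nndist F 0 ^ b := by
    gcongr <;> exact BoundedContinuousFunction.NNReal.upper_bound _ _
  let product : ℂ →ᵇ ℝ≥0 := BoundedContinuousFunction.mkOfBound
    ⟨fun z ↦ G z.re ^ a * F z.im ^ b, by fun_prop (disch := simp [ha.le, hb.le])⟩
    (nndist G 0 ^ a * nndist F 0 ^ b : ℝ≥0) fun x y ↦
      abs_sub_le_of_nonneg_of_le (NNReal.coe_nonneg _) (mod_cast hbound x) (NNReal.coe_nonneg _)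
        (mod_cast hbound y)
  have hproduct (z : ℂ) : (product z : ℝ≥0∞) = (G z.re : ℝ≥0∞) ^ a * (F z.im : ℝ≥0∞) ^ b := by
    simp [product, ENNReal.coe_rpow_of_nonneg, ha.le, hb.le]
  simp only [← hproduct]
  refine le_of_tendsto_of_tendsto' (hlintegral product)
    (ENNReal.Tendsto.mul ((hlintegral Gre).ennrpow_const a) (.inr ?_)
      ((hlintegral Fim).ennrpow_const b) (.inr ?_)) fun i ↦ ?_
  · exact ENNReal.rpow_ne_top_of_nonneg hb.le (Fim.lintegral_lt_top_of_nnreal _).ne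
  · exact ENNReal.rpow_ne_top_of_nonneg ha.le (Gre.lintegral_lt_top_of_nnreal _).ne
  · simp only [hproduct]
    exact h i _ _ G.measurable_coe_ennreal_comp F.measurable_coe_ennreal_comp

end MarginalHolderBound

/-- The law of the sum of `n` independent random variables of law `m`. -/
noncomputable def convPow {M : Type*} [AddMonoid M] [MeasurableSpace M] (m : Measure M) :
    ℕ → Measure M
  | 0 => Measure.dirac 0
  | n + 1 => convPow m n ∗ m

instance isProbabilityMeasure_convPow {M : Type*} [AddMonoid M] [MeasurableSpace M]
    [MeasurableAdd₂ M] (m : Measure M) [IsProbabilityMeasure m] (n : ℕ) :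
    IsProbabilityMeasure (convPow m n) := by
  induction n with
  | zero => unfold convPow; infer_instance
  | succ n ih => unfold convPow; infer_instance

theorem charFun_convPow {E : Type*} [NormedAddCommGroup E] [InnerProductSpace ℝ E]
    [MeasurableSpace E] [BorelSpace E] [SecondCountableTopology E] (m : Measure E)
    [IsProbabilityMeasure m] (n : ℕ) (t : E) :
    charFun (convPow m n) t = charFun m t ^ n := by
  induction n with
  | zero => simp [convPow]
  | succ n ih => rw [convPow, charFun_conv, ih, pow_succ]

theorem MarginalHolderBound.convPow {a b : ℝ} {m : Measure ℂ} [IsProbabilityMeasure m]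
    (h : MarginalHolderBound a b m) (n : ℕ) : MarginalHolderBound a b (convPow m n) := by
  induction n with
  | zero => exact .dirac a b 0
  | succ n ih => exact ih.conv h

/-- The law on `ℂ ≃ ℝ × ℝ` of `δ` times a pair of uniformly distributed signs with
correlation `ρ`; it is meaningful for `ρ ^ 2 ≤ 1`. -/
noncomputable def correlatedSigns (ρ δ : ℝ) : Measure ℂ :=
  ENNReal.ofReal ((1 + ρ) / 4) • (Measure.dirac ⟨δ, δ⟩ + Measure.dirac ⟨-δ, -δ⟩) +
    ENNReal.ofReal ((1 - ρ) / 4) • (Measure.dirac ⟨δ, -δ⟩ + Measure.dirac ⟨-δ, δ⟩)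

theorem lintegral_correlatedSigns (ρ δ : ℝ) (f : ℂ → ℝ≥0∞) :
    ∫⁻ z, f z ∂correlatedSigns ρ δ =
      ENNReal.ofReal ((1 + ρ) / 4) * (f ⟨δ, δ⟩ + f ⟨-δ, -δ⟩) +
        ENNReal.ofReal ((1 - ρ) / 4) * (f ⟨δ, -δ⟩ + f ⟨-δ, δ⟩) := by
  simp [correlatedSigns, mul_add]

theorem lintegral_correlatedSigns_coe {ρ : ℝ} (hρ : ρ ^ 2 ≤ 1) (δ : ℝ) (f : ℂ → ℝ≥0) :
    ∫⁻ z, f z ∂correlatedSigns ρ δ = ENNReal.ofReal ((1 + ρ) / 4 * (f ⟨δ, δ⟩ + f ⟨-δ, -δ⟩) +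
      (1 - ρ) / 4 * (f ⟨δ, -δ⟩ + f ⟨-δ, δ⟩)) := by
  obtain ⟨hplus, hminus⟩ : 0 ≤ (1 + ρ) / 4 ∧ 0 ≤ (1 - ρ) / 4 := by
    have := abs_le.1 ((sq_le_one_iff_abs_le_one ρ).1 hρ)
    constructor <;> linarith
  rw [lintegral_correlatedSigns, ENNReal.ofReal_add (by positivity) (by positivity),
    ENNReal.ofReal_mul hplus, ENNReal.ofReal_mul hminus]
  simp only [← NNReal.coe_add, ENNReal.ofReal_coe_nnreal, ENNReal.coe_add]

theorem isProbabilityMeasure_correlatedSigns {ρ : ℝ} (hρ : ρ ^ 2 ≤ 1) (δ : ℝ) :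
    IsProbabilityMeasure (correlatedSigns ρ δ) := by
  constructor
  have := lintegral_correlatedSigns_coe hρ δ 1
  rw [← lintegral_one]
  simp only [Pi.one_apply, ENNReal.coe_one, NNReal.coe_one] at this
  rw [this, ← ENNReal.ofReal_one]
  ring_nf

theorem charFun_correlatedSigns {ρ : ℝ} (hρ : ρ ^ 2 ≤ 1) (δ : ℝ) (t : ℂ) :
    charFun (correlatedSigns ρ δ) t =
      (((1 + ρ) / 2 * Real.cos (δ * (t.re + t.im)) +
        (1 - ρ) / 2 * Real.cos (δ * (t.re - t.im)) : ℝ) : ℂ) := by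
  have := abs_le.1 ((sq_le_one_iff_abs_le_one ρ).1 hρ)
  have hintegrable (c : ℝ) (x y : ℂ) (f : ℂ → ℂ) :
      Integrable f (ENNReal.ofReal c • (Measure.dirac x + Measure.dirac y)) :=
    ((integrable_dirac (by simp)).add_measure (integrable_dirac (by simp))).smul_measure (by simp)
  rw [charFun_apply, correlatedSigns,
    integral_add_measure (hintegrable _ _ _ _) (hintegrable _ _ _ _),
    integral_smul_measure, integral_smul_measure,
    integral_add_measure (integrable_dirac (by simp)) (integrable_dirac (by simp)),
    integral_add_measure (integrable_dirac (by simp)) (integrable_dirac (by simp)),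
    ENNReal.toReal_ofReal (by linarith), ENNReal.toReal_ofReal (by linarith)]
  simp only [integral_dirac, Complex.inner, Complex.ofReal_add, Complex.ofReal_mul,
    Complex.ofReal_cos, Complex.cos]
  simp only [Complex.mul_re, Complex.conj_re, Complex.conj_im, mul_neg, sub_eq_add_neg, neg_neg,
    Complex.ofReal_add, Complex.ofReal_mul, Complex.ofReal_neg, smul_add, Complex.real_smul,
    Complex.ofReal_div, Complex.ofReal_one, Complex.ofReal_ofNat, neg_mul]
  ring_nf

-- The substitution `u = G ^ q'⁻¹`, `w = F ^ p⁻¹` turns this into the bilinear two-point inequality.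
theorem correlatedSigns_rpow_mul_rpow_le {p q q' ρ : ℝ} (hp : 1 < p) (hpq : p ≤ q)
    (hq : q.HolderConjugate q') (hρ : ρ ^ 2 * (q - 1) ≤ p - 1) (G₁ G₂ F₁ F₂ : ℝ≥0) :
    (1 + ρ) / 4 * ((G₁ ^ q'⁻¹ * F₁ ^ p⁻¹ : ℝ≥0) + (G₂ ^ q'⁻¹ * F₂ ^ p⁻¹ : ℝ≥0)) +
      (1 - ρ) / 4 * ((G₁ ^ q'⁻¹ * F₂ ^ p⁻¹ : ℝ≥0) + (G₂ ^ q'⁻¹ * F₁ ^ p⁻¹ : ℝ≥0)) ≤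
    ((G₁ + G₂ : ℝ) / 2) ^ q'⁻¹ * ((F₁ + F₂ : ℝ) / 2) ^ p⁻¹ := by
  have habs (x y : ℝ≥0) : |((x : ℝ) - y) / 2| ≤ (x + y) / 2 :=
    abs_le.2 ⟨by linarith [x.coe_nonneg], by linarith [y.coe_nonneg]⟩
  have hnorm {r : ℝ} (hr : r ≠ 0) (x y : ℝ≥0) :
      signNorm r (((x ^ r⁻¹ : ℝ≥0) + (y ^ r⁻¹ : ℝ≥0) : ℝ) / 2)
        (((x ^ r⁻¹ : ℝ≥0) - (y ^ r⁻¹ : ℝ≥0) : ℝ) / 2) = ((x + y : ℝ) / 2) ^ r⁻¹ := by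
    rw [signNorm, signMoment, ← add_div, ← sub_div, add_add_sub_cancel, add_sub_sub_cancel,
      add_self_div_two, add_self_div_two, NNReal.coe_rpow, NNReal.coe_rpow,
      Real.rpow_inv_rpow x.coe_nonneg hr, Real.rpow_inv_rpow y.coe_nonneg hr]
  rw [← hnorm hq.symm.ne_zero, ← hnorm (by linarith : p ≠ 0)]
  refine le_trans (le_of_eq ?_)
    (mul_add_mul_mul_le_signNorm_mul_signNorm hp hpq hq hρ (habs _ _) (habs _ _))
  push_cast
  ring

theorem marginalHolderBound_correlatedSigns {p q q' ρ : ℝ} (hp : 1 < p) (hpq : p ≤ q)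
    (hq : q.HolderConjugate q') (hρ : ρ ^ 2 * (q - 1) ≤ p - 1) (δ : ℝ) :
    MarginalHolderBound q'⁻¹ p⁻¹ (correlatedSigns ρ δ) := by
  have hρ₁ := sq_le_one_of_mul_sub_one_le hp hpq hρ
  have := isProbabilityMeasure_correlatedSigns hρ₁ δ
  obtain ⟨hplus, hminus⟩ : 0 ≤ 1 + ρ ∧ 0 ≤ 1 - ρ := by
    have := abs_le.1 ((sq_le_one_iff_abs_le_one ρ).1 hρ₁)
    constructor <;> linarith
  have hp₀ : 0 < p := by linarith
  have hp' : 0 < p⁻¹ := inv_pos.2 hp₀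
  have hq' : 0 < q'⁻¹ := hq.symm.inv_pos
  refine .of_forall_boundedContinuous hq' hp' fun G F ↦ ?_
  simp only [← ENNReal.coe_rpow_of_nonneg _ hp'.le, ← ENNReal.coe_rpow_of_nonneg _ hq'.le,
    ← ENNReal.coe_mul, lintegral_correlatedSigns_coe hρ₁]
  rw [ENNReal.ofReal_rpow_of_nonneg _ hq'.le, ENNReal.ofReal_rpow_of_nonneg _ hp'.le,
    ← ENNReal.ofReal_mul]
  · refine ENNReal.ofReal_le_ofReal
      ((correlatedSigns_rpow_mul_rpow_le hp hpq hq hρ _ _ _ _).trans_eq ?_)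
    congr 2 <;> ring
  all_goals positivity

/-! ### Gaussian hypercontractivity -/

theorem cos_sub_one_eq_neg_sq_div_two_mul_sinc_sq (x : ℝ) :
    Real.cos x - 1 = -x ^ 2 / 2 * Real.sinc (x / 2) ^ 2 := by
  have hsin : x / 2 * Real.sinc (x / 2) = Real.sin (x / 2) := by
    rcases eq_or_ne (x / 2) 0 with h | h
    · simp [h]
    · rw [Real.sinc_of_ne_zero h, mul_div_cancel₀ _ h]
  have hcos : Real.cos x = 1 - 2 * Real.sin (x / 2) ^ 2 := by
    rw [← Real.cos_sq_add_sin_sq (x / 2)]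
    nth_rw 1 [← mul_div_cancel₀ x (two_ne_zero' ℝ)]
    rw [Real.cos_two_mul']
    ring
  rw [hcos, ← hsin]
  ring

theorem tendsto_natCast_mul_cos_div_sqrt_sub_one (x : ℝ) :
    Tendsto (fun n : ℕ ↦ n * (Real.cos (x / √n) - 1)) atTop (𝓝 (-x ^ 2 / 2)) := by
  have hzero : Tendsto (fun n : ℕ ↦ x / √n / 2) atTop (𝓝 0) := by
    simpa using ((Real.tendsto_sqrt_atTop.comp tendsto_natCast_atTop_atTop).const_div_atTop
      x).div_const 2
  have hsinc : Tendsto (fun n : ℕ ↦ -x ^ 2 / 2 * Real.sinc (x / √n / 2) ^ 2) atTop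
      (𝓝 (-x ^ 2 / 2)) := by
    simpa using (((Real.continuous_sinc.tendsto 0).comp hzero).pow 2).const_mul (-x ^ 2 / 2)
  refine hsinc.congr' ?_
  filter_upwards [eventually_gt_atTop 0] with n hn
  have hn' : (n : ℝ) ≠ 0 := by positivity
  rw [cos_sub_one_eq_neg_sq_div_two_mul_sinc_sq, div_pow, Real.sq_sqrt n.cast_nonneg]
  field_simp

theorem tendsto_charFun_convPow_correlatedSigns {ρ : ℝ} (hρ : ρ ^ 2 ≤ 1) (σ : ℝ) (t : ℂ) :
    Tendsto (fun n : ℕ ↦ charFun (convPow (correlatedSigns ρ (σ / √n)) n) t) atTop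
      (𝓝 (Real.exp (-(σ ^ 2 * (t.re ^ 2 + t.im ^ 2 + 2 * ρ * t.re * t.im)) / 2) : ℝ)) := by
  have := isProbabilityMeasure_correlatedSigns hρ
  simp_rw [charFun_convPow, charFun_correlatedSigns hρ, ← Complex.ofReal_pow]
  refine (Complex.continuous_ofReal.tendsto _).comp ?_
  have hplus := (tendsto_natCast_mul_cos_div_sqrt_sub_one (σ * (t.re + t.im))).const_mul
    ((1 + ρ) / 2)
  have hminus := (tendsto_natCast_mul_cos_div_sqrt_sub_one (σ * (t.re - t.im))).const_mul
    ((1 - ρ) / 2)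
  have hsum : Tendsto (fun n : ℕ ↦ n * ((1 + ρ) / 2 * (Real.cos (σ * (t.re + t.im) / √n) - 1) +
      (1 - ρ) / 2 * (Real.cos (σ * (t.re - t.im) / √n) - 1))) atTop
      (𝓝 (-(σ ^ 2 * (t.re ^ 2 + t.im ^ 2 + 2 * ρ * t.re * t.im)) / 2)) := by
    convert hplus.add hminus using 2 <;> ring
  refine (Real.tendsto_one_add_pow_exp_of_tendsto hsum).congr fun n ↦ ?_
  rw [div_mul_eq_mul_div σ, div_mul_eq_mul_div σ]
  ring

theorem map_prod_gaussianReal_add {ρ c : ℝ} (hρc : ρ ^ 2 + c ^ 2 = 1) (v : ℝ≥0) :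
    ((gaussianReal 0 v).prod (gaussianReal 0 v)).map (fun x ↦ ρ * x.1 + c * x.2) =
      gaussianReal 0 v := by
  have hconv : (gaussianReal 0 v).map (ρ * ·) ∗ (gaussianReal 0 v).map (c * ·) =
      gaussianReal 0 v := by
    rw [gaussianReal_map_const_mul, gaussianReal_map_const_mul, gaussianReal_conv_gaussianReal,
      mul_zero, mul_zero, add_zero, ← add_mul]
    congr 1
    refine (congrArg (· * v) (NNReal.eq ?_)).trans (one_mul v)
    exact hρc
  conv_rhs => rw [← hconv]
  rw [Measure.conv, Measure.map_prod_map _ _ (by fun_prop) (by fun_prop),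
    Measure.map_map (by fun_prop) (by fun_prop)]
  rfl

/-- The law on `ℂ ≃ ℝ × ℝ` of a pair of centered Gaussian variables of variance `v` with
correlation `ρ`, realized as `(X, ρ X + √(1 - ρ ^ 2) Y)` for independent `X` and `Y`. It is
meaningful for `ρ ^ 2 ≤ 1`. -/
noncomputable def correlatedGaussian (v : ℝ≥0) (ρ : ℝ) : Measure ℂ :=
  ((gaussianReal 0 v).prod (gaussianReal 0 v)).map
    fun x ↦ (⟨x.1, ρ * x.1 + √(1 - ρ ^ 2) * x.2⟩ : ℂ)

theorem measurable_complexMk {X : Type*} [MeasurableSpace X] {f g : X → ℝ} (hf : Measurable f)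
    (hg : Measurable g) : Measurable fun x ↦ (⟨f x, g x⟩ : ℂ) :=
  Complex.measurableEquivRealProd.symm.measurable.comp (hf.prodMk hg)

instance isProbabilityMeasure_correlatedGaussian (v : ℝ≥0) (ρ : ℝ) :
    IsProbabilityMeasure (correlatedGaussian v ρ) :=
  Measure.isProbabilityMeasure_map
    (measurable_complexMk measurable_fst (by fun_prop)).aemeasurable

theorem sq_add_sqrt_one_sub_sq_sq {ρ : ℝ} (hρ : ρ ^ 2 ≤ 1) : ρ ^ 2 + √(1 - ρ ^ 2) ^ 2 = 1 := by
  rw [Real.sq_sqrt (sub_nonneg.2 hρ), add_sub_cancel]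

theorem lintegral_correlatedGaussian (v : ℝ≥0) (ρ : ℝ) {f : ℂ → ℝ≥0∞} (hf : Measurable f) :
    ∫⁻ z, f z ∂correlatedGaussian v ρ =
      ∫⁻ x, ∫⁻ y, f ⟨x, ρ * x + √(1 - ρ ^ 2) * y⟩ ∂gaussianReal 0 v ∂gaussianReal 0 v := by
  have hpair : Measurable fun x : ℝ × ℝ ↦ (⟨x.1, ρ * x.1 + √(1 - ρ ^ 2) * x.2⟩ : ℂ) :=
    measurable_complexMk measurable_fst (by fun_prop)
  rw [correlatedGaussian, lintegral_map hf hpair]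
  exact lintegral_prod _ (hf.comp hpair).aemeasurable

theorem lintegral_correlatedGaussian_re (v : ℝ≥0) (ρ : ℝ) {f : ℝ → ℝ≥0∞} (hf : Measurable f) :
    ∫⁻ z, f z.re ∂correlatedGaussian v ρ = ∫⁻ x, f x ∂gaussianReal 0 v := by
  rw [lintegral_correlatedGaussian v ρ (by fun_prop)]
  simp

theorem lintegral_correlatedGaussian_im (v : ℝ≥0) {ρ : ℝ} (hρ : ρ ^ 2 ≤ 1) {f : ℝ → ℝ≥0∞}
    (hf : Measurable f) :
    ∫⁻ z, f z.im ∂correlatedGaussian v ρ = ∫⁻ x, f x ∂gaussianReal 0 v := by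
  rw [correlatedGaussian,
    lintegral_map (by fun_prop) (measurable_complexMk measurable_fst (by fun_prop))]
  conv_rhs => rw [← map_prod_gaussianReal_add (sq_add_sqrt_one_sub_sq_sq hρ) v,
    lintegral_map hf (by fun_prop)]

theorem charFun_correlatedGaussian (v : ℝ≥0) {ρ : ℝ} (hρ : ρ ^ 2 ≤ 1) (t : ℂ) :
    charFun (correlatedGaussian v ρ) t =
      (Real.exp (-(v * (t.re ^ 2 + t.im ^ 2 + 2 * ρ * t.re * t.im)) / 2) : ℝ) := by
  have hfactor : charFun (correlatedGaussian v ρ) t =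
      charFun (gaussianReal 0 v) (t.re + ρ * t.im) *
        charFun (gaussianReal 0 v) (√(1 - ρ ^ 2) * t.im) := by
    rw [charFun_apply, correlatedGaussian,
      integral_map (measurable_complexMk measurable_fst (by fun_prop)).aemeasurable (by fun_prop),
      charFun_apply_real, charFun_apply_real, ← integral_prod_mul]
    congr 1 with x
    rw [← Complex.exp_add, Complex.inner]
    congr 1
    simp only [Complex.mul_re, Complex.conj_re, Complex.conj_im]
    push_cast
    ring
  rw [hfactor, charFun_gaussianReal, charFun_gaussianReal, ← Complex.exp_add, Complex.ofReal_exp]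
  congr 1
  have hsq : (ρ : ℂ) ^ 2 + (√(1 - ρ ^ 2) : ℂ) ^ 2 = 1 := by
    exact_mod_cast sq_add_sqrt_one_sub_sq_sq hρ
  push_cast
  linear_combination (-(v : ℂ) * (t.im : ℂ) ^ 2 / 2) * hsq

theorem marginalHolderBound_correlatedGaussian {p q q' ρ : ℝ} (hp : 1 < p) (hpq : p ≤ q)
    (hq : q.HolderConjugate q') (hρ : ρ ^ 2 * (q - 1) ≤ p - 1) (v : ℝ≥0) :
    MarginalHolderBound q'⁻¹ p⁻¹ (correlatedGaussian v ρ) := by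
  have hρ₁ := sq_le_one_of_mul_sub_one_le hp hpq hρ
  have := isProbabilityMeasure_correlatedSigns hρ₁
  let signSum (n : ℕ) : ProbabilityMeasure ℂ :=
    ⟨convPow (correlatedSigns ρ (√v / √n)) n, inferInstance⟩
  let gaussian : ProbabilityMeasure ℂ := ⟨correlatedGaussian v ρ, inferInstance⟩
  have hlim : Tendsto signSum atTop (𝓝 gaussian) := by
    refine ProbabilityMeasure.tendsto_of_tendsto_charFun fun t ↦ ?_
    have hcharFun := tendsto_charFun_convPow_correlatedSigns hρ₁ √v t
    rw [Real.sq_sqrt v.coe_nonneg] at hcharFun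
    simpa only [signSum, gaussian, ProbabilityMeasure.coe_mk,
      charFun_correlatedGaussian v hρ₁ t] using hcharFun
  exact .of_tendsto hq.symm.inv_pos (inv_pos.2 (by linarith)) hlim fun n ↦
    (marginalHolderBound_correlatedSigns hp hpq hq hρ _).convPow n

theorem rpow_inv_le_of_le_rpow_inv_mul {q q' : ℝ} (hq : q.HolderConjugate q') {I C : ℝ≥0∞}
    (hI : I ≠ ⊤) (h : I ≤ I ^ q'⁻¹ * C) : I ^ q⁻¹ ≤ C := by
  rcases eq_or_ne I 0 with rfl | hI₀
  · simp [hq.pos]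
  refine (ENNReal.mul_le_mul_iff_right (a := I ^ q'⁻¹) ?_ ?_).1 ?_
  · simp [hI₀, hI]
  · exact ENNReal.rpow_ne_top_of_nonneg hq.symm.inv_nonneg hI
  · rwa [← ENNReal.rpow_add _ _ hI₀ hI, hq.symm.inv_add_inv_eq_one, ENNReal.rpow_one]

theorem lintegral_rpow_le_of_forall_lintegral_rpow_mul_le {X : Type*} [MeasurableSpace X]
    {μ : Measure X} [IsFiniteMeasure μ] {q q' : ℝ} (hq : q.HolderConjugate q') {f : X → ℝ≥0∞}
    (hf : Measurable f) {C : ℝ≥0∞}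
    (h : ∀ G : X → ℝ≥0∞, Measurable G →
      ∫⁻ x, G x ^ q'⁻¹ * f x ∂μ ≤ (∫⁻ x, G x ∂μ) ^ q'⁻¹ * C) :
    (∫⁻ x, f x ^ q ∂μ) ^ q⁻¹ ≤ C := by
  have hpow (u : ℝ≥0∞) : u ^ q = (u ^ q) ^ q'⁻¹ * u := by
    rw [← ENNReal.rpow_mul, ← div_eq_mul_inv, hq.div_conj_eq_sub_one]
    conv_rhs => rw [← ENNReal.rpow_one u, ← ENNReal.rpow_mul, one_mul,
      ← ENNReal.rpow_add_of_nonneg _ _ hq.sub_one_pos.le zero_le_one, sub_add_cancel]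
  have htruncate (n : ℕ) : (∫⁻ x, min (f x) n ^ q ∂μ) ^ q⁻¹ ≤ C := by
    have hfinite : ∫⁻ x, min (f x) n ^ q ∂μ ≠ ⊤ := by
      refine ne_top_of_le_ne_top (b := ∫⁻ _, (n : ℝ≥0∞) ^ q ∂μ) ?_ ?_
      · rw [lintegral_const]
        exact ENNReal.mul_ne_top (by simp [hq.nonneg]) (measure_ne_top μ _)
      · gcongr
        · exact hq.nonneg
        · exact min_le_right _ _
    refine rpow_inv_le_of_le_rpow_inv_mul hq hfinite (le_trans ?_ (h _ (by fun_prop)))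
    refine lintegral_mono fun x ↦ ?_
    calc min (f x) n ^ q = (min (f x) n ^ q) ^ q'⁻¹ * min (f x) n := hpow _
      _ ≤ (min (f x) n ^ q) ^ q'⁻¹ * f x := by gcongr; exact min_le_left _ _
  have hlim : Tendsto (fun n : ℕ ↦ ∫⁻ x, min (f x) n ^ q ∂μ) atTop (𝓝 (∫⁻ x, f x ^ q ∂μ)) := by
    refine lintegral_tendsto_of_tendsto_of_monotone (fun n ↦ by fun_prop)
      (.of_forall fun x m n hmn ↦ ?_) (.of_forall fun x ↦ ?_)
    · have := hq.nonneg
      dsimp only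
      gcongr
    · simpa using (tendsto_const_nhds.min ENNReal.tendsto_nat_nhds_top).ennrpow_const q
  exact le_of_tendsto' (hlim.ennrpow_const q⁻¹) htruncate

/-- The Ornstein–Uhlenbeck operator `Q_t` with invariant measure `gaussianReal 0 v`, given by
Mehler's formula and parametrized by `ρ = e⁻ᵗ`. -/
noncomputable def ornsteinUhlenbeck {E : Type*} [NormedAddCommGroup E] [NormedSpace ℝ E] (v : ℝ≥0)
    (ρ : ℝ) (f : ℝ → E) (x : ℝ) : E :=
  ∫ y, f (ρ * x + √(1 - ρ ^ 2) * y) ∂gaussianReal 0 v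

theorem lintegral_lintegral_rpow_le_gaussianReal {p q ρ : ℝ} (hp : 1 < p) (hpq : p ≤ q)
    (hρ : ρ ^ 2 * (q - 1) ≤ p - 1) (v : ℝ≥0) {f : ℝ → ℝ≥0∞} (hf : Measurable f) :
    (∫⁻ x, (∫⁻ y, f (ρ * x + √(1 - ρ ^ 2) * y) ∂gaussianReal 0 v) ^ q ∂gaussianReal 0 v) ^ q⁻¹ ≤
      (∫⁻ x, f x ^ p ∂gaussianReal 0 v) ^ p⁻¹ := by
  have hq := Real.HolderConjugate.conjExponent (hp.trans_le hpq)
  have hmeas : Measurable fun x ↦ ∫⁻ y, f (ρ * x + √(1 - ρ ^ 2) * y) ∂gaussianReal 0 v :=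
    Measurable.lintegral_prod_right'
      (f := fun x : ℝ × ℝ ↦ f (ρ * x.1 + √(1 - ρ ^ 2) * x.2)) (by fun_prop)
  refine lintegral_rpow_le_of_forall_lintegral_rpow_mul_le hq hmeas fun G hG ↦ ?_
  have hbound := marginalHolderBound_correlatedGaussian hp hpq hq hρ v G (fun x ↦ f x ^ p) hG
    (by fun_prop)
  rw [lintegral_correlatedGaussian_re v ρ hG, lintegral_correlatedGaussian_im v
    (sq_le_one_of_mul_sub_one_le hp hpq hρ) (f := fun x ↦ f x ^ p) (by fun_prop),
    lintegral_correlatedGaussian v ρ (by fun_prop)] at hbound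
  have hmeas' (x : ℝ) : Measurable fun y ↦ f (ρ * x + √(1 - ρ ^ 2) * y) := by fun_prop
  simpa only [ENNReal.rpow_rpow_inv (by linarith : p ≠ 0), lintegral_const_mul _ (hmeas' _)]
    using hbound

theorem eLpNorm_ornsteinUhlenbeck_le {E : Type*} [NormedAddCommGroup E] [NormedSpace ℝ E]
    {p q ρ : ℝ} (hp : 1 < p) (hpq : p ≤ q) (hρ : ρ ^ 2 * (q - 1) ≤ p - 1) (v : ℝ≥0) {f : ℝ → E}
    (hf : AEStronglyMeasurable f (gaussianReal 0 v)) :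
    eLpNorm (ornsteinUhlenbeck v ρ f) (ENNReal.ofReal q) (gaussianReal 0 v) ≤
      eLpNorm f (ENNReal.ofReal p) (gaussianReal 0 v) := by
  have hp₀ : 0 < p := by linarith
  have hq₀ : 0 < q := by linarith
  have hcov := sq_add_sqrt_one_sub_sq_sq (sq_le_one_of_mul_sub_one_le hp hpq hρ)
  obtain ⟨g, hg, hfg⟩ := hf.enorm
  have hfg' : ∀ᵐ x ∂gaussianReal 0 v, ∀ᵐ y ∂gaussianReal 0 v,
      ‖f (ρ * x + √(1 - ρ ^ 2) * y)‖ₑ = g (ρ * x + √(1 - ρ ^ 2) * y) := by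
    rw [← map_prod_gaussianReal_add hcov v] at hfg
    exact Measure.ae_ae_of_ae_prod (ae_of_ae_map (by fun_prop) hfg)
  have hnorm {r : ℝ} (hr : 0 < r) (u : ℝ → E) : eLpNorm u (ENNReal.ofReal r) (gaussianReal 0 v) =
      (∫⁻ x, ‖u x‖ₑ ^ r ∂gaussianReal 0 v) ^ r⁻¹ := by
    rw [eLpNorm_eq_lintegral_rpow_enorm_toReal (by simpa using hr) (by simp),
      ENNReal.toReal_ofReal hr.le, one_div]
  rw [hnorm hq₀, hnorm hp₀]
  calc (∫⁻ x, ‖ornsteinUhlenbeck v ρ f x‖ₑ ^ q ∂gaussianReal 0 v) ^ q⁻¹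
      ≤ (∫⁻ x, (∫⁻ y, g (ρ * x + √(1 - ρ ^ 2) * y) ∂gaussianReal 0 v) ^ q
          ∂gaussianReal 0 v) ^ q⁻¹ := by
        refine ENNReal.rpow_le_rpow (lintegral_mono_ae ?_) (inv_nonneg.2 hq₀.le)
        filter_upwards [hfg'] with x hx
        rw [← lintegral_congr_ae hx]
        exact ENNReal.rpow_le_rpow (enorm_integral_le_lintegral_enorm _) hq₀.le
    _ ≤ (∫⁻ x, g x ^ p ∂gaussianReal 0 v) ^ p⁻¹ :=
        lintegral_lintegral_rpow_le_gaussianReal hp hpq hρ v hg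
    _ = (∫⁻ x, ‖f x‖ₑ ^ p ∂gaussianReal 0 v) ^ p⁻¹ := by
        congr 1
        exact lintegral_congr_ae (hfg.mono fun x hx ↦ congrArg (· ^ p) hx.symm)

theorem eLpNorm_le_pow_of_norm_le_ornsteinUhlenbeck {E : Type*} [NormedAddCommGroup E]
    [NormedSpace ℝ E] {v C : ℝ≥0} {d : ℝ} (hd : 1 ≤ d) {f g : ℝ → E}
    (hg : AEStronglyMeasurable g (gaussianReal 0 v))
    (hgf : ∀ᵐ x ∂gaussianReal 0 v, ‖g x‖ ≤ ‖f x‖)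
    (hfg : ∀ᵐ x ∂gaussianReal 0 v, ‖f x‖ ≤ C * ‖ornsteinUhlenbeck v d⁻¹ g x‖)
    (hf : eLpNorm f 2 (gaussianReal 0 v) ≤ 1) (k : ℕ) :
    eLpNorm f (ENNReal.ofReal (1 + d ^ (2 * k))) (gaussianReal 0 v) ≤ C ^ k := by
  induction k with
  | zero => simpa [one_add_one_eq_two] using hf
  | succ k ih =>
    have hpos : 0 < d ^ (2 * k) := by positivity
    have hexp : 1 + d ^ (2 * k) ≤ 1 + d ^ (2 * (k + 1)) := by
      gcongr
      exact k.le_succ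
    have hcontraction : d⁻¹ ^ 2 * (1 + d ^ (2 * (k + 1)) - 1) ≤ 1 + d ^ (2 * k) - 1 := by
      refine le_of_eq ?_
      field_simp
      ring
    calc eLpNorm f (ENNReal.ofReal (1 + d ^ (2 * (k + 1)))) (gaussianReal 0 v)
        ≤ C * eLpNorm (ornsteinUhlenbeck v d⁻¹ g) (ENNReal.ofReal (1 + d ^ (2 * (k + 1))))
            (gaussianReal 0 v) := eLpNorm_le_nnreal_smul_eLpNorm_of_ae_le_mul hfg _
      _ ≤ C * eLpNorm g (ENNReal.ofReal (1 + d ^ (2 * k))) (gaussianReal 0 v) := by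
          gcongr
          exact eLpNorm_ornsteinUhlenbeck_le (by linarith) hexp hcontraction v hg
      _ ≤ C * C ^ k := by
          gcongr
          exact (eLpNorm_mono_ae hgf).trans ih
      _ = C ^ (k + 1) := (pow_succ' _ _).symm

theorem stmt_8_general {E : Type*} [NormedAddCommGroup E] [NormedSpace ℝ E] {d : ℝ} (hd : 1 ≤ d)
    {v : ℝ≥0} {ν : Measure ℝ} (hν : ν = gaussianReal 0 v) {P Q : Lp E 2 ν → Lp E 2 ν}
    (hQ : ∀ f, Q f =ᵐ[ν] fun a ↦ ∫ y, f (a / d + √(1 - 1 / d ^ 2) * y) ∂ν)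
    (hP : ∀ f, ∀ᵐ a ∂ν, ‖P f a‖ ≤ ‖f a‖) {χ : Lp E 2 ν} (hχ : ‖χ‖ = 1) {c : ℝ} (hc : c ≠ 0)
    (hχeig : P (d • Q (P χ)) = c • χ) (k : ℕ) :
    eLpNorm χ (1 + ENNReal.ofReal d ^ (2 * k)) ν ≤ ENNReal.ofReal ((d / |c|) ^ k) := by
  subst hν
  have hd₀ : 0 ≤ d := by linarith
  have hχ₂ : eLpNorm χ 2 (gaussianReal 0 v) ≤ 1 := by
    rw [Lp.norm_def, ENNReal.toReal_eq_one_iff] at hχ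
    exact hχ.le
  have hχ_le : ∀ᵐ a ∂gaussianReal 0 v,
      ‖χ a‖ ≤ (d / |c|).toNNReal * ‖ornsteinUhlenbeck v d⁻¹ (P χ) a‖ := by
    have hsmul := hχeig ▸ Lp.coeFn_smul c χ
    filter_upwards [hsmul, hP (d • Q (P χ)), Lp.coeFn_smul d (Q (P χ)), hQ (P χ)]
      with a hcχ hPa hdQ hQa
    rw [hcχ, hdQ, Pi.smul_apply, Pi.smul_apply, norm_smul, norm_smul, hQa, Real.norm_eq_abs,
      Real.norm_of_nonneg hd₀] at hPa
    rw [Real.coe_toNNReal _ (by positivity), div_mul_eq_mul_div, le_div_iff₀' (abs_pos.2 hc)]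
    simpa only [ornsteinUhlenbeck, inv_pow, one_div, div_eq_inv_mul, mul_one] using hPa
  have hexp : 1 + ENNReal.ofReal d ^ (2 * k) = ENNReal.ofReal (1 + d ^ (2 * k)) := by
    rw [ENNReal.ofReal_add zero_le_one (by positivity), ENNReal.ofReal_pow hd₀, ENNReal.ofReal_one]
  rw [hexp, ENNReal.ofReal_pow (by positivity)]
  exact eLpNorm_le_pow_of_norm_le_ornsteinUhlenbeck hd (Lp.aestronglyMeasurable _) (hP χ) hχ_le
    hχ₂ k

end

/-- The top normalized non-negative eigenfunction χ_h of
L_h = π_h(dQ_{log d})π_h with eigenvalue λ_h = ‖L_h‖ > 0 satisfies the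
hypercontractive bounds ‖χ_h‖_{L^{q_k}(ν)} ≤ (d/λ_h)^k, where q_k = 1 + d^{2k}. -/
theorem stmt_8 (d : ℕ) (hd : 2 ≤ d)
    (ν : Measure ℝ) (hν : ν = gaussianReal 0 (Real.toNNReal ((d : ℝ) / ((d : ℝ) ^ 2 - 1))))
    (Q : Lp ℝ 2 ν →L[ℝ] Lp ℝ 2 ν)
    (hQ : ∀ f : Lp ℝ 2 ν, (Q f : ℝ → ℝ) =ᵐ[ν]
      fun a => ∫ y, (f : ℝ → ℝ) (a / d + Real.sqrt (1 - 1 / (d : ℝ) ^ 2) * y) ∂ν)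
    (h : ℝ) (Ph : Lp ℝ 2 ν →L[ℝ] Lp ℝ 2 ν)
    (hPh : ∀ f : Lp ℝ 2 ν, (Ph f : ℝ → ℝ) =ᵐ[ν]
      fun a => if h ≤ a then (f : ℝ → ℝ) a else 0)
    (Lh : Lp ℝ 2 ν →L[ℝ] Lp ℝ 2 ν) (hLh : Lh = Ph ∘L ((d : ℝ) • Q) ∘L Ph)
    (hpos : 0 < ‖Lh‖)
    (χ : Lp ℝ 2 ν) (hχnn : ∀ᵐ a ∂ν, 0 ≤ (χ : ℝ → ℝ) a) (hχnorm : ‖χ‖ = 1)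
    (hχeig : Lh χ = ‖Lh‖ • χ) :
    ∀ k : ℕ, eLpNorm (χ : ℝ → ℝ) (1 + (d : ℝ≥0∞) ^ (2 * k)) ν ≤
      ENNReal.ofReal (((d : ℝ) / ‖Lh‖) ^ k) := by
  intro k
  have hcutoff (f : Lp ℝ 2 ν) : ∀ᵐ a ∂ν, ‖Ph f a‖ ≤ ‖f a‖ :=
    (hPh f).mono fun a ha ↦ by rw [ha]; beta_reduce; split_ifs <;> simp
  simpa using stmt_8_general (d := d) (mod_cast one_le_two.trans hd) hν hQ hcutoff hχnorm
    hpos.ne' ((DFunLike.congr_fun hLh χ).symm.trans hχeig) k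
end

section
/- The function h ↦ λ_h = ‖π_h (dQ_{log d}) π_h‖_{L²(ν)→L²(ν)} is strictly decreasing on ℝ. -/
open MeasureTheory ProbabilityTheory
open Filter Function Set Topology
open scoped ENNReal NNReal

/-!
The operator `Q` has the Mehler kernel, which is strictly positive and square integrable. Square
integrability makes `Q` completely continuous, so the norm of every truncation `π_h Q π_h` is
attained at some `f` in the unit ball. Positivity gives `|π_h Q π_h f| ≤ π_h Q π_h |f|` and shows
that `Q` maps nonzero nonnegative functions to strictly positive ones. Hence for `b < h` the
function `π_b Q π_b |f|` dominates `π_h Q π_h |f|` and exceeds it strictly on `[b, h)`, which makes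
its norm strictly larger than `‖π_h Q π_h‖`.
-/

section CompletelyContinuous

variable {𝕜 E F G : Type*} [RCLike 𝕜] [NormedAddCommGroup E] [NormedSpace 𝕜 E]
  [NormedAddCommGroup F] [NormedSpace 𝕜 F] [NormedAddCommGroup G] [NormedSpace 𝕜 G]

/-- A bounded operator is completely continuous if it maps weakly convergent sequences to norm
convergent ones. -/
def IsCompletelyContinuous (T : E →L[𝕜] F) : Prop :=
  SeqContinuous fun x : WeakSpace 𝕜 E => T ((toWeakSpace 𝕜 E).symm x)

lemma IsCompletelyContinuous.clm_comp {T : E →L[𝕜] F} (hT : IsCompletelyContinuous T)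
    (S : F →L[𝕜] G) : IsCompletelyContinuous (S ∘L T) :=
  fun _ _ hx => (S.continuous.tendsto _).comp (hT hx)

lemma IsCompletelyContinuous.comp_clm {T : F →L[𝕜] G} (hT : IsCompletelyContinuous T)
    (S : E →L[𝕜] F) : IsCompletelyContinuous (T ∘L S) :=
  fun _ _ hx => hT (((WeakSpace.map S).continuous.tendsto _).comp hx)

lemma isCompletelyContinuous_of_tendsto_zero {T : E →L[𝕜] F}
    (hT : ∀ x : ℕ → E, Tendsto (fun n => toWeakSpace 𝕜 E (x n)) atTop (𝓝 0) →
      Tendsto (fun n => T (x n)) atTop (𝓝 0)) : IsCompletelyContinuous T := by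
  intro x y hx
  have hxy : Tendsto (fun n => x n - y) atTop (𝓝 0) := by
    simpa only [sub_self] using hx.sub_const y
  refine tendsto_sub_nhds_zero_iff.1 ?_
  simpa only [map_sub, comp_def] using hT (fun n => (toWeakSpace 𝕜 E).symm (x n - y)) hxy

lemma exists_norm_le_of_tendsto_weakSpace {x : ℕ → E} {y : WeakSpace 𝕜 E}
    (hx : Tendsto (fun n => toWeakSpace 𝕜 E (x n)) atTop (𝓝 y)) : ∃ C, ∀ n, ‖x n‖ ≤ C := by
  obtain ⟨C, hC⟩ := banach_steinhaus (g := fun n => NormedSpace.inclusionInDoubleDual 𝕜 E (x n))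
    fun φ => (Metric.isBounded_range_of_tendsto _
      (((WeakBilin.eval_continuous _ φ).tendsto y).comp hx)).exists_norm_le.imp
        fun C hC n => hC _ (mem_range_self n)
  exact ⟨C, fun n => ((NormedSpace.inclusionInDoubleDualLi 𝕜).norm_map (x n)).symm.trans_le (hC n)⟩

end CompletelyContinuous

section Hilbert

variable {𝕜 H F : Type*} [RCLike 𝕜] [NormedAddCommGroup H] [InnerProductSpace 𝕜 H]
  [CompleteSpace H] [TopologicalSpace.SeparableSpace H] [NormedAddCommGroup F] [NormedSpace 𝕜 F]

lemma isSeqCompact_toWeakSpace_image_closedBall (r : ℝ) :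
    IsSeqCompact (toWeakSpace 𝕜 H '' Metric.closedBall 0 r) := by
  let riesz : WeakDual 𝕜 H → WeakSpace 𝕜 H := fun φ =>
    toWeakSpace 𝕜 H ((InnerProductSpace.toDual 𝕜 H).symm φ.toStrongDual)
  have continuous_riesz : Continuous riesz := by
    refine WeakBilin.continuous_of_continuous_eval _ fun ψ => ?_
    obtain ⟨z, rfl⟩ := (InnerProductSpace.toDual 𝕜 H).surjective ψ
    convert RCLike.continuous_conj.comp (WeakDual.eval_continuous z) using 2 with φ
    change inner 𝕜 z ((InnerProductSpace.toDual 𝕜 H).symm φ.toStrongDual) = _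
    rw [← inner_conj_symm, InnerProductSpace.toDual_symm_apply]
    rfl
  convert (WeakDual.isSeqCompact_closedBall 𝕜 H 0 r).image continuous_riesz.seqContinuous using 1
  ext x
  constructor
  · rintro ⟨z, hz, rfl⟩
    refine ⟨(InnerProductSpace.toDual 𝕜 H z).toWeakDual, ?_, ?_⟩
    · simpa using hz
    · simp [riesz]
  · rintro ⟨φ, hφ, rfl⟩
    exact mem_image_of_mem _ (by simpa using hφ)

theorem IsCompletelyContinuous.exists_norm_apply_eq {T : H →L[𝕜] F}
    (hT : IsCompletelyContinuous T) : ∃ x, ‖x‖ ≤ 1 ∧ ‖T x‖ = ‖T‖ := by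
  have hcpt : IsCompact (T '' Metric.closedBall 0 1) := by
    simpa [image_image] using
      ((isSeqCompact_toWeakSpace_image_closedBall (𝕜 := 𝕜) (H := H) 1).image hT).isCompact
  obtain ⟨_, ⟨x, hx, rfl⟩, hmax⟩ :=
    hcpt.exists_isMaxOn ⟨_, mem_image_of_mem T (Metric.mem_closedBall_self zero_le_one)⟩
      continuous_norm.continuousOn
  rw [mem_closedBall_zero_iff] at hx
  refine ⟨x, hx, (T.unit_le_opNorm x hx).antisymm
    (T.opNorm_le_of_unit_norm (norm_nonneg _) fun z hz => ?_)⟩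
  exact hmax (mem_image_of_mem T (mem_closedBall_zero_iff.2 hz.le))

end Hilbert

section L2

variable {α : Type*} [MeasurableSpace α] {μ : Measure α}

lemma integral_mul_eq_inner_toLp {g : α → ℝ} (hg : MemLp g 2 μ) (f : Lp ℝ 2 μ) :
    ∫ a, g a * f a ∂μ = inner ℝ f (hg.toLp g) := by
  rw [L2.inner_def]
  refine integral_congr_ae ?_
  filter_upwards [hg.coeFn_toLp] with a ha
  rw [ha]
  rfl

lemma integral_sq_eq_norm_toLp_sq {g : α → ℝ} (hg : MemLp g 2 μ) :
    ∫ a, g a ^ 2 ∂μ = ‖hg.toLp g‖ ^ 2 := by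
  rw [← real_inner_self_eq_norm_sq, ← integral_mul_eq_inner_toLp hg]
  refine integral_congr_ae ?_
  filter_upwards [hg.coeFn_toLp] with a ha
  rw [ha, sq]

lemma integral_coeFn_sq_eq_norm_sq (f : Lp ℝ 2 μ) : ∫ a, f a ^ 2 ∂μ = ‖f‖ ^ 2 := by
  rw [integral_sq_eq_norm_toLp_sq (Lp.memLp f), Lp.toLp_coeFn]

lemma sq_integral_mul_le {g : α → ℝ} (hg : MemLp g 2 μ) (f : Lp ℝ 2 μ) :
    (∫ a, g a * f a ∂μ) ^ 2 ≤ (∫ a, g a ^ 2 ∂μ) * ‖f‖ ^ 2 := by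
  rw [integral_mul_eq_inner_toLp hg, integral_sq_eq_norm_toLp_sq hg, ← mul_pow, mul_comm]
  exact sq_le_sq' (neg_le_of_abs_le (abs_real_inner_le_norm _ _)) (real_inner_le_norm _ _)

lemma inner_nonneg_of_nonneg {f g : Lp ℝ 2 μ} (hf : 0 ≤ f) (hg : 0 ≤ g) : 0 ≤ inner ℝ f g := by
  rw [L2.inner_def]
  refine integral_nonneg_of_ae ?_
  filter_upwards [(Lp.coeFn_nonneg f).2 hf, (Lp.coeFn_nonneg g).2 hg] with a hfa hga
  exact mul_nonneg hga hfa

lemma norm_lt_norm_of_nonneg_of_lt {f g : Lp ℝ 2 μ} (hf : 0 ≤ f) (hfg : f < g) : ‖f‖ < ‖g‖ := by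
  have hcross : 0 ≤ inner ℝ f (g - f) := inner_nonneg_of_nonneg hf (sub_nonneg.2 hfg.le)
  have hgap : 0 < ‖g - f‖ := norm_pos_iff.2 (sub_ne_zero.2 hfg.ne')
  have hexp := norm_add_sq_real f (g - f)
  rw [add_sub_cancel] at hexp
  exact lt_of_pow_lt_pow_left₀ 2 (norm_nonneg _) (by nlinarith)

end L2

section IntegralOperator

variable {α β : Type*} [MeasurableSpace α] [MeasurableSpace β] {μ : Measure α} {ν : Measure β}

/-- `T` is the integral operator `f ↦ ∫ K(·, y) f(y) dν(y)`. -/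
def HasKernel (T : Lp ℝ 2 ν →L[ℝ] Lp ℝ 2 μ) (K : α → β → ℝ) : Prop :=
  ∀ f : Lp ℝ 2 ν, T f =ᵐ[μ] fun a => ∫ y, K a y * f y ∂ν

variable [SFinite μ] [SFinite ν] {K : α → β → ℝ} {T : Lp ℝ 2 ν →L[ℝ] Lp ℝ 2 μ}

lemma ae_memLp_two_of_memLp_two_uncurry (hK : MemLp (uncurry K) 2 (μ.prod ν)) :
    ∀ᵐ a ∂μ, MemLp (K a) 2 ν := by
  filter_upwards [hK.aestronglyMeasurable.prodMk_left, hK.integrable_sq.prod_right_ae]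
    with a hmeas hint
  exact (memLp_two_iff_integrable_sq hmeas).2 hint

lemma HasKernel.ae_sq_le (hT : HasKernel T K) (hK : MemLp (uncurry K) 2 (μ.prod ν))
    (f : Lp ℝ 2 ν) : ∀ᵐ a ∂μ, T f a ^ 2 ≤ (∫ y, K a y ^ 2 ∂ν) * ‖f‖ ^ 2 := by
  filter_upwards [hT f, ae_memLp_two_of_memLp_two_uncurry hK] with a hTf hKa
  rw [hTf]
  exact sq_integral_mul_le hKa f

lemma HasKernel.ae_tendsto_zero (hT : HasKernel T K) (hK : MemLp (uncurry K) 2 (μ.prod ν))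
    {f : ℕ → Lp ℝ 2 ν} (hf : Tendsto (fun n => toWeakSpace ℝ _ (f n)) atTop (𝓝 0)) :
    ∀ᵐ a ∂μ, Tendsto (fun n => T (f n) a) atTop (𝓝 0) := by
  filter_upwards [ae_memLp_two_of_memLp_two_uncurry hK, ae_all_iff.2 fun n => hT (f n)]
    with a hKa hTf
  simp_rw [hTf, integral_mul_eq_inner_toLp hKa, real_inner_comm (hKa.toLp (K a))]
  rw [← inner_zero_right (𝕜 := ℝ) (hKa.toLp (K a))]
  exact ((WeakBilin.eval_continuous _ (innerSL ℝ (hKa.toLp (K a)))).tendsto 0).comp hf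

theorem HasKernel.isCompletelyContinuous (hT : HasKernel T K)
    (hK : MemLp (uncurry K) 2 (μ.prod ν)) : IsCompletelyContinuous T := by
  refine isCompletelyContinuous_of_tendsto_zero fun f hf => ?_
  obtain ⟨C, hC⟩ := exists_norm_le_of_tendsto_weakSpace hf
  have hlim : Tendsto (fun n => ∫ a, T (f n) a ^ 2 ∂μ) atTop (𝓝 (∫ _, 0 ∂μ)) := by
    refine tendsto_integral_of_dominated_convergence (fun a => (∫ y, K a y ^ 2 ∂ν) * C ^ 2)
      (fun n => (Lp.aestronglyMeasurable _).pow 2)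
      (hK.integrable_sq.integral_prod_left.mul_const _) (fun n => ?_) ?_
    · filter_upwards [hT.ae_sq_le hK (f n)] with a ha
      rw [Real.norm_of_nonneg (sq_nonneg _)]
      refine ha.trans (mul_le_mul_of_nonneg_left ?_ (integral_nonneg fun y => sq_nonneg _))
      exact pow_le_pow_left₀ (norm_nonneg _) (hC n) 2
    · filter_upwards [hT.ae_tendsto_zero hK hf] with a ha
      simpa using ha.pow 2
  simp only [integral_coeFn_sq_eq_norm_sq, integral_zero] at hlim
  rw [tendsto_zero_iff_norm_tendsto_zero]
  simpa using hlim.sqrt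

end IntegralOperator

section PositivityImproving

variable {α β : Type*} [MeasurableSpace α] [MeasurableSpace β] {μ : Measure α} {ν : Measure β}

/-- A positivity improving operator sends every nonzero nonnegative function to an almost everywhere
strictly positive one. -/
def IsPositivityImproving {p q : ℝ≥0∞} [Fact (1 ≤ p)] [Fact (1 ≤ q)]
    (T : Lp ℝ p ν →L[ℝ] Lp ℝ q μ) : Prop :=
  ∀ f : Lp ℝ p ν, 0 ≤ f → f ≠ 0 → ∀ᵐ a ∂μ, 0 < T f a

section Order

variable {p q : ℝ≥0∞} [Fact (1 ≤ p)] [Fact (1 ≤ q)] {T : Lp ℝ p ν →L[ℝ] Lp ℝ q μ}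

lemma IsPositivityImproving.monotone (hT : IsPositivityImproving T) : Monotone T := by
  intro f g hfg
  rcases eq_or_ne g f with rfl | hne
  · rfl
  · rw [← sub_nonneg, ← map_sub, ← Lp.coeFn_nonneg]
    filter_upwards [hT (g - f) (sub_nonneg.2 hfg) (sub_ne_zero.2 hne)] with a ha
    exact ha.le

lemma IsPositivityImproving.abs_apply_le (hT : IsPositivityImproving T) (f : Lp ℝ p ν) :
    |T f| ≤ T |f| :=
  abs_le'.2 ⟨hT.monotone (le_abs_self f), map_neg T f ▸ hT.monotone (neg_le_abs f)⟩

end Order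

lemma HasKernel.isPositivityImproving [SFinite μ] [SFinite ν] {K : α → β → ℝ}
    {T : Lp ℝ 2 ν →L[ℝ] Lp ℝ 2 μ} (hT : HasKernel T K) (hK : MemLp (uncurry K) 2 (μ.prod ν))
    (hpos : ∀ᵐ a ∂μ, ∀ᵐ y ∂ν, 0 < K a y) : IsPositivityImproving T := by
  intro f hf hf0
  have hf_nonneg : 0 ≤ᵐ[ν] f := (Lp.coeFn_nonneg f).2 hf
  filter_upwards [hT f, ae_memLp_two_of_memLp_two_uncurry hK, hpos] with a hTf hKa hKpos
  have hnonneg : 0 ≤ᵐ[ν] fun y => K a y * f y := by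
    filter_upwards [hKpos, hf_nonneg] with y hKy hfy
    exact mul_nonneg hKy.le hfy
  rw [hTf]
  refine (integral_nonneg_of_ae hnonneg).lt_of_ne' fun hzero => hf0 ?_
  rw [integral_eq_zero_iff_of_nonneg_ae hnonneg (hKa.integrable_mul (Lp.memLp f))] at hzero
  refine (Lp.eq_zero_iff_ae_eq_zero).2 ?_
  filter_upwards [hzero, hKpos] with y hy hKy
  exact (mul_eq_zero.1 hy).resolve_left hKy.ne'

end PositivityImproving

section Truncation

variable {α : Type*} [MeasurableSpace α] {μ : Measure α} {s t : Set α}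

/-- `P` is the truncation to `s`, that is, multiplication by the indicator function of `s`. -/
def IsTruncation {p : ℝ≥0∞} [Fact (1 ≤ p)] (s : Set α) (P : Lp ℝ p μ →L[ℝ] Lp ℝ p μ) : Prop :=
  ∀ f : Lp ℝ p μ, P f =ᵐ[μ] s.indicator f

section Order

variable {p : ℝ≥0∞} [Fact (1 ≤ p)] {P P' : Lp ℝ p μ →L[ℝ] Lp ℝ p μ} {f : Lp ℝ p μ}

lemma IsTruncation.abs_apply (hP : IsTruncation s P) (f : Lp ℝ p μ) : |P f| = P |f| := by
  refine Lp.ext ?_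
  filter_upwards [hP f, hP |f|, Lp.coeFn_abs f, Lp.coeFn_abs (P f)] with a hPf hPabs habs habs_apply
  rw [habs_apply, hPf, hPabs]
  by_cases ha : a ∈ s <;> simp [ha, habs]

lemma IsTruncation.monotone (hP : IsTruncation s P) : Monotone P := by
  intro f g hfg
  rw [← Lp.coeFn_le] at hfg ⊢
  filter_upwards [hP f, hP g, hfg] with a hf hg hle
  rw [hf, hg]
  exact indicator_le_indicator hle

lemma IsTruncation.apply_le_apply (hP : IsTruncation s P) (hP' : IsTruncation t P') (hst : s ⊆ t)
    (hf : 0 ≤ f) : P f ≤ P' f := by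
  rw [← Lp.coeFn_le]
  filter_upwards [hP f, hP' f, (Lp.coeFn_nonneg f).2 hf] with a hPa hPa' hfa
  rw [hPa, hPa']
  exact indicator_le_indicator_apply_of_subset hst hfa

lemma IsTruncation.norm_apply_le (hP : IsTruncation s P) (hP' : IsTruncation t P') (hst : s ⊆ t)
    (f : Lp ℝ p μ) : ‖P f‖ ≤ ‖P' f‖ := by
  refine norm_le_norm_of_abs_le_abs ?_
  rw [hP.abs_apply, hP'.abs_apply]
  exact hP.apply_le_apply hP' hst (abs_nonneg f)

lemma IsTruncation.apply_lt_apply (hP : IsTruncation s P) (hP' : IsTruncation t P') (hst : s ⊆ t)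
    (hμ : μ (t \ s) ≠ 0) (hf : ∀ᵐ a ∂μ, 0 < f a) : P f < P' f := by
  have hf_nonneg : 0 ≤ f := (Lp.coeFn_nonneg f).1 (hf.mono fun _ => le_of_lt)
  refine (hP.apply_le_apply hP' hst hf_nonneg).lt_of_ne fun heq => hμ ?_
  rw [measure_eq_zero_iff_ae_notMem]
  filter_upwards [hP f, hP' f, hf] with a hPa hPa' hfa ha
  rw [heq, hPa', indicator_of_mem ha.1, indicator_of_notMem ha.2] at hPa
  exact hfa.ne' hPa

lemma IsTruncation.measure_eq_zero [SigmaFinite μ]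
    (h : IsTruncation s (0 : Lp ℝ p μ →L[ℝ] Lp ℝ p μ)) : μ s = 0 := by
  have hspan : ∀ n, ∀ᵐ a ∂μ, a ∈ spanningSets μ n → a ∉ s := by
    intro n
    have hn := measurableSet_spanningSets μ n
    have hfin := (measure_spanningSets_lt_top μ n).ne
    filter_upwards [h (indicatorConstLp p hn hfin 1), Lp.coeFn_zero ℝ p μ,
      indicatorConstLp_coeFn (p := p) (hs := hn) (hμs := hfin) (c := (1 : ℝ))]
      with a ha hzero hcoe han has
    rw [zero_apply, hzero, indicator_of_mem has, hcoe,
      indicator_of_mem han] at ha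
    exact zero_ne_one ha
  rw [measure_eq_zero_iff_ae_notMem]
  filter_upwards [ae_all_iff.2 hspan] with a ha
  exact ha _ (mem_spanningSetsIndex μ a)

end Order

variable {P P' Q : Lp ℝ 2 μ →L[ℝ] Lp ℝ 2 μ}

lemma norm_truncation_comp_apply_lt (hQ : IsPositivityImproving Q) (hP : IsTruncation s P)
    (hP' : IsTruncation t P') (hst : s ⊆ t) (hμ : μ (t \ s) ≠ 0) {f : Lp ℝ 2 μ}
    (hf : P' f ≠ 0) : ‖P (Q (P f))‖ < ‖P' (Q (P' |f|))‖ := by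
  have hP'f : 0 ≤ P' |f| := hP'.abs_apply f ▸ abs_nonneg _
  have hP'f0 : P' |f| ≠ 0 := by
    rwa [← norm_ne_zero_iff, ← hP'.abs_apply, norm_abs_eq_norm, norm_ne_zero_iff]
  rw [← norm_abs_eq_norm]
  refine norm_lt_norm_of_nonneg_of_lt (abs_nonneg _) ?_
  calc |P (Q (P f))| = P |Q (P f)| := hP.abs_apply _
    _ ≤ P (Q |P f|) := hP.monotone (hQ.abs_apply_le _)
    _ = P (Q (P |f|)) := by rw [hP.abs_apply]
    _ ≤ P (Q (P' |f|)) :=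
      hP.monotone (hQ.monotone (hP.apply_le_apply hP' hst (abs_nonneg f)))
    _ < P' (Q (P' |f|)) := hP.apply_lt_apply hP' hst hμ (hQ _ hP'f hP'f0)

theorem norm_truncation_comp_lt [SigmaFinite μ] [IsSeparable μ]
    (hQ : IsPositivityImproving Q) (hQc : IsCompletelyContinuous Q) (hP : IsTruncation s P)
    (hP' : IsTruncation t P') (hst : s ⊆ t) (hμ : μ (t \ s) ≠ 0) :
    ‖P ∘L Q ∘L P‖ < ‖P' ∘L Q ∘L P'‖ := by
  have : Fact ((2 : ℝ≥0∞) ≠ ∞) := ⟨ENNReal.ofNat_ne_top⟩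
  obtain ⟨f, hf, hattain⟩ := ((hQc.comp_clm P).clm_comp P).exists_norm_apply_eq
  by_cases hP'f : P' f = 0
  · have hPf : P f = 0 := norm_le_zero_iff.1 (by simpa [hP'f] using hP.norm_apply_le hP' hst f)
    have hP'0 : P' ≠ 0 := by
      rintro rfl
      exact hμ (measure_mono_null sdiff_subset hP'.measure_eq_zero)
    obtain ⟨g, hg⟩ := DFunLike.ne_iff.1 hP'0
    have hpos : 0 < ‖(P' ∘L Q ∘L P') |g|‖ :=
      (norm_nonneg _).trans_lt (norm_truncation_comp_apply_lt hQ hP hP' hst hμ hg)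
    calc ‖P ∘L Q ∘L P‖ = 0 := by simp [← hattain, hPf]
      _ < ‖P' ∘L Q ∘L P'‖ := norm_pos_iff.2 fun hzero => by simp [hzero] at hpos
  · calc ‖P ∘L Q ∘L P‖ = ‖P (Q (P f))‖ := hattain.symm
      _ < ‖P' (Q (P' |f|))‖ := norm_truncation_comp_apply_lt hQ hP hP' hst hμ hP'f
      _ ≤ ‖P' ∘L Q ∘L P'‖ :=
        (P' ∘L Q ∘L P').unit_le_opNorm |f| ((norm_abs_eq_norm f).trans_le hf)

end Truncation

section Mehler

/-- The Mehler kernel: the density of the Gaussian law `N(ρ a, (1 - ρ ^ 2) v)` with respect to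
`N(0, v)`, evaluated at `y`. -/
noncomputable def mehlerKernel (ρ v a y : ℝ) : ℝ :=
  (√(1 - ρ ^ 2))⁻¹ * Real.exp ((2 * ρ * a * y - ρ ^ 2 * (a ^ 2 + y ^ 2)) / (2 * (1 - ρ ^ 2) * v))

lemma measurable_uncurry_mehlerKernel (ρ v : ℝ) : Measurable (uncurry (mehlerKernel ρ v)) := by
  unfold mehlerKernel uncurry
  fun_prop

variable {ρ : ℝ}

lemma mehlerKernel_pos (hρ : |ρ| < 1) (v a y : ℝ) : 0 < mehlerKernel ρ v a y :=
  mul_pos (inv_pos.2 (Real.sqrt_pos.2 (sub_pos.2 ((sq_lt_one_iff_abs_lt_one ρ).2 hρ))))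
    (Real.exp_pos _)

lemma gaussianPDFReal_eq_mehlerKernel_mul (hρ : |ρ| < 1) {v u : ℝ≥0} (hv : v ≠ 0)
    (hu : (u : ℝ) = (1 - ρ ^ 2) * v) (a y : ℝ) :
    gaussianPDFReal (ρ * a) u y = gaussianPDFReal 0 v y * mehlerKernel ρ v a y := by
  have hρ' : 0 < 1 - ρ ^ 2 := sub_pos.2 ((sq_lt_one_iff_abs_lt_one ρ).2 hρ)
  have hv' : (v : ℝ) ≠ 0 := NNReal.coe_ne_zero.2 hv
  rw [gaussianPDFReal, gaussianPDFReal, mehlerKernel, hu,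
    mul_mul_mul_comm (√(2 * Real.pi * v))⁻¹, ← Real.exp_add,
    ← mul_inv, ← Real.sqrt_mul (by positivity)]
  congr 1
  · congr 2
    ring
  · congr 1
    field_simp
    ring

lemma gaussianReal_map_const_add_const_mul (m : ℝ) (v : ℝ≥0) (b c : ℝ) :
    (gaussianReal m v).map (fun y => b + c * y) =
      gaussianReal (c * m + b) (.mk (c ^ 2) (sq_nonneg c) * v) := by
  rw [← gaussianReal_map_const_add, ← gaussianReal_map_const_mul,
    Measure.map_map (by fun_prop) (by fun_prop)]
  rfl

lemma integral_comp_gaussianReal_eq_integral_mehlerKernel (hρ : |ρ| < 1) {v : ℝ≥0}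
    (hv : v ≠ 0) (f : ℝ → ℝ) (a : ℝ) :
    ∫ y, f (ρ * a + √(1 - ρ ^ 2) * y) ∂gaussianReal 0 v =
      ∫ y, mehlerKernel ρ v a y * f y ∂gaussianReal 0 v := by
  have hρ' : 0 < 1 - ρ ^ 2 := sub_pos.2 ((sq_lt_one_iff_abs_lt_one ρ).2 hρ)
  have hs : √(1 - ρ ^ 2) ≠ 0 := (Real.sqrt_pos.2 hρ').ne'
  have hemb : MeasurableEmbedding fun y => ρ * a + √(1 - ρ ^ 2) * y :=
    (measurableEmbedding_addLeft _).comp (measurableEmbedding_mulLeft₀ hs)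
  have hvar : NNReal.mk (√(1 - ρ ^ 2) ^ 2) (sq_nonneg _) * v ≠ 0 :=
    mul_ne_zero (NNReal.coe_ne_zero.1 (pow_ne_zero 2 hs)) hv
  rw [← hemb.integral_map, gaussianReal_map_const_add_const_mul, mul_zero, zero_add,
    integral_gaussianReal_eq_integral_smul hvar, integral_gaussianReal_eq_integral_smul hv]
  congr with y
  rw [gaussianPDFReal_eq_mehlerKernel_mul hρ hv (by simp [Real.sq_sqrt hρ'.le]), smul_eq_mul,
    smul_eq_mul, mul_assoc]

lemma mehlerKernel_le (hρ : |ρ| < 1) {v : ℝ} (hv : 0 < v) (a y : ℝ) :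
    mehlerKernel ρ v a y ≤ (√(1 - ρ ^ 2))⁻¹ *
      (Real.exp (|ρ| / (2 * (1 + |ρ|) * v) * a ^ 2) *
        Real.exp (|ρ| / (2 * (1 + |ρ|) * v) * y ^ 2)) := by
  have hρ' : 0 < 1 - |ρ| := sub_pos.2 hρ
  have hcross : 2 * ρ * a * y ≤ |ρ| * (a ^ 2 + y ^ 2) := by
    rcases abs_cases ρ with ⟨h, h0⟩ | ⟨h, h0⟩ <;> rw [h]
    · nlinarith [mul_nonneg h0 (sq_nonneg (a - y))]
    · nlinarith [mul_nonneg (neg_nonneg.2 h0.le) (sq_nonneg (a + y))]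
  rw [mehlerKernel, ← Real.exp_add, ← sq_abs ρ,
    show 1 - |ρ| ^ 2 = (1 - |ρ|) * (1 + |ρ|) by ring]
  refine mul_le_mul_of_nonneg_left (Real.exp_le_exp.2 ?_) (by positivity)
  rw [div_le_iff₀ (by positivity)]
  calc 2 * ρ * a * y - |ρ| ^ 2 * (a ^ 2 + y ^ 2)
      ≤ |ρ| * (1 - |ρ|) * (a ^ 2 + y ^ 2) := by linarith
    _ = _ := by field_simp

lemma memLp_two_exp_mul_sq_gaussianReal {v : ℝ≥0} (hv : v ≠ 0) {β : ℝ} (hβ : 4 * β * v < 1) :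
    MemLp (fun y => Real.exp (β * y ^ 2)) 2 (gaussianReal 0 v) := by
  have : (0 : ℝ) < v := NNReal.coe_pos.2 (pos_iff_ne_zero.2 hv)
  rw [memLp_two_iff_integrable_sq (by fun_prop), gaussianReal_of_var_ne_zero _ hv,
    integrable_withDensity_iff_integrable_smul' (measurable_gaussianPDF 0 v)
      (Eventually.of_forall fun _ => gaussianPDF_lt_top)]
  have hb : 0 < 1 / (2 * v) - 2 * β := by
    rw [sub_pos, lt_div_iff₀ (by positivity)]
    linarith
  refine ((integrable_exp_neg_mul_sq hb).const_mul (√(2 * Real.pi * v))⁻¹).congr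
    (Eventually.of_forall fun y => ?_)
  simp only [toReal_gaussianPDF, smul_eq_mul, gaussianPDFReal]
  rw [mul_assoc (√(2 * Real.pi * v))⁻¹, ← Real.exp_nat_mul, ← Real.exp_add]
  congr 2
  push_cast
  ring

lemma memLp_two_uncurry_mehlerKernel (hρ : |ρ| < 1) {v : ℝ≥0} (hv : v ≠ 0) :
    MemLp (uncurry (mehlerKernel ρ v)) 2 ((gaussianReal 0 v).prod (gaussianReal 0 v)) := by
  have hv' : (0 : ℝ) < v := NNReal.coe_pos.2 (pos_iff_ne_zero.2 hv)
  have hβ : 4 * (|ρ| / (2 * (1 + |ρ|) * v)) * v < 1 := by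
    have heq : 4 * (|ρ| / (2 * (1 + |ρ|) * v)) * v = 2 * |ρ| / (1 + |ρ|) := by
      field_simp
      ring
    rw [heq, div_lt_one (by positivity)]
    linarith
  have hexp := memLp_two_exp_mul_sq_gaussianReal hv hβ
  have hdom : MemLp (fun z : ℝ × ℝ => Real.exp (|ρ| / (2 * (1 + |ρ|) * v) * z.1 ^ 2) *
      Real.exp (|ρ| / (2 * (1 + |ρ|) * v) * z.2 ^ 2)) 2
      ((gaussianReal 0 v).prod (gaussianReal 0 v)) := by
    rw [memLp_two_iff_integrable_sq (by fun_prop)]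
    simpa only [mul_pow] using hexp.integrable_sq.mul_prod hexp.integrable_sq
  refine (hdom.const_mul (√(1 - ρ ^ 2))⁻¹).mono
    (measurable_uncurry_mehlerKernel ρ v).aestronglyMeasurable (Eventually.of_forall fun z => ?_)
  rw [uncurry, Real.norm_of_nonneg (mehlerKernel_pos hρ v z.1 z.2).le]
  exact (mehlerKernel_le hρ hv' z.1 z.2).trans (Real.le_norm_self _)

lemma gaussianReal_Ici_sdiff_Ici_ne_zero (m : ℝ) {v : ℝ≥0} (hv : v ≠ 0) {b c : ℝ} (hbc : b < c) :
    gaussianReal m v (Ici b \ Ici c) ≠ 0 := by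
  have := (gaussianReal_absolutelyContinuous' m hv).isOpenPosMeasure
  rw [Ici_sdiff_Ici]
  exact (((Measure.measure_Ioo_pos _).2 hbc).trans_le (measure_mono Ioo_subset_Ico_self)).ne'

end Mehler

theorem stmt_9_general {v : ℝ≥0} (hv : v ≠ 0) {ρ : ℝ} (hρ : |ρ| < 1) {c : ℝ} (hc : c ≠ 0)
    (Q : Lp ℝ 2 (gaussianReal 0 v) →L[ℝ] Lp ℝ 2 (gaussianReal 0 v))
    (hQ : ∀ f : Lp ℝ 2 (gaussianReal 0 v), Q f =ᵐ[gaussianReal 0 v]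
      fun a => ∫ y, f (ρ * a + √(1 - ρ ^ 2) * y) ∂gaussianReal 0 v)
    (P : ℝ → Lp ℝ 2 (gaussianReal 0 v) →L[ℝ] Lp ℝ 2 (gaussianReal 0 v))
    (hP : ∀ h, IsTruncation (Ici h) (P h)) :
    StrictAnti fun h => ‖P h ∘L (c • Q) ∘L P h‖ := by
  have hK := memLp_two_uncurry_mehlerKernel hρ hv
  have hQK : HasKernel Q (mehlerKernel ρ v) := by
    simpa only [HasKernel, integral_comp_gaussianReal_eq_integral_mehlerKernel hρ hv] using hQ
  have hQpos : IsPositivityImproving Q := hQK.isPositivityImproving hK <|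
    Eventually.of_forall fun a => Eventually.of_forall (mehlerKernel_pos hρ v a)
  intro b b' hb
  simp only [ContinuousLinearMap.smul_comp, ContinuousLinearMap.comp_smul, norm_smul]
  exact mul_lt_mul_of_pos_left (norm_truncation_comp_lt hQpos (hQK.isCompletelyContinuous hK)
    (hP b') (hP b) (Ici_subset_Ici.2 hb.le) (gaussianReal_Ici_sdiff_Ici_ne_zero 0 hv hb))
    (norm_pos_iff.2 hc)

/-- The function h ↦ λ_h = ‖π_h (dQ_{log d}) π_h‖ on L²(ν) is strictly
decreasing on ℝ. -/
theorem stmt_9 (d : ℕ) (hd : 2 ≤ d)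
    (ν : Measure ℝ) (hν : ν = gaussianReal 0 (Real.toNNReal ((d : ℝ) / ((d : ℝ) ^ 2 - 1))))
    (Q : Lp ℝ 2 ν →L[ℝ] Lp ℝ 2 ν)
    (hQ : ∀ f : Lp ℝ 2 ν, (Q f : ℝ → ℝ) =ᵐ[ν]
      fun a => ∫ y, (f : ℝ → ℝ) (a / d + Real.sqrt (1 - 1 / (d : ℝ) ^ 2) * y) ∂ν)
    (Ph : ℝ → (Lp ℝ 2 ν →L[ℝ] Lp ℝ 2 ν))
    (hPh : ∀ (h : ℝ) (f : Lp ℝ 2 ν), (Ph h f : ℝ → ℝ) =ᵐ[ν]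
      fun a => if h ≤ a then (f : ℝ → ℝ) a else 0) :
    StrictAnti (fun h : ℝ => ‖Ph h ∘L ((d : ℝ) • Q) ∘L Ph h‖) := by
  subst hν
  have hd1 : (1 : ℝ) < d := by exact_mod_cast hd
  have hd0 : (0 : ℝ) < d := zero_lt_one.trans hd1
  have hv : Real.toNNReal ((d : ℝ) / ((d : ℝ) ^ 2 - 1)) ≠ 0 :=
    (Real.toNNReal_pos.2 (div_pos hd0 (by nlinarith))).ne'
  have hρ : |(d : ℝ)⁻¹| < 1 := by
    rw [abs_of_pos (inv_pos.2 hd0)]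
    exact inv_lt_one_of_one_lt₀ hd1
  refine stmt_9_general hv hρ hd0.ne' Q (fun f => ?_) Ph hPh
  simpa only [div_eq_inv_mul, mul_one, inv_pow] using hQ f
end
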